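/- arXiv:1809.03089 — 2 statements merged into one kernel-verified Lean document; each statement's English description precedes it below -/
import Mathlib

section
/- There exists an absolute constant C such that the following holds. Suppose that f : M_{(k,n−k)} → {0,1} is a function on the slice (the multislice with ℓ = 2 colours and weights κ_1 = k, κ_2 = n−k) satisfying ‖f^{>1}‖² = ε, where 2 ≤ k ≤ n/2. Then there exists a set S ⊆ [n] of cardinality at most max(1, C√ε·(n/k)) such that either f or 1−f is Cε-close (in squared L² distance with respect to the uniform measure) to the function u ↦ max_{j∈S} x_{j1}(u), i.e. the indicator that u_j = 1 for some j ∈ S. -/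
open Finset

noncomputable section

/-- The multislice: vectors in `[ℓ]^n` whose colour counts are given by `κ`. -/
def multislice (ℓ n : ℕ) (κ : Fin ℓ → ℕ) : Finset (Fin n → Fin ℓ) :=
  Finset.univ.filter fun u => ∀ i, (Finset.univ.filter fun j => u j = i).card = κ i

/-- Expectation with respect to the uniform measure on the multislice. -/
def msExp (ℓ n : ℕ) (κ : Fin ℓ → ℕ) (f : (Fin n → Fin ℓ) → ℝ) : ℝ :=
  (∑ u ∈ multislice ℓ n κ, f u) / ((multislice ℓ n κ).card : ℝ)

/-- The indicator variable `x_{ji}`. -/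
def xvar (ℓ n : ℕ) (j : Fin n) (i : Fin ℓ) (u : Fin n → Fin ℓ) : ℝ :=
  if u j = i then 1 else 0

/-- A function on the multislice has degree one if it is of the form
`c + ∑_j ∑_i c_{ji} x_{ji}`. -/
def degreeOne (ℓ n : ℕ) (κ : Fin ℓ → ℕ) (f : (Fin n → Fin ℓ) → ℝ) : Prop :=
  ∃ (c : ℝ) (coef : Fin n → Fin ℓ → ℝ), ∀ u ∈ multislice ℓ n κ,
    f u = c + ∑ j, ∑ i, coef j i * xvar ℓ n j i u

/-- Distance of a real number to the set `{0,1}`. -/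
def dist01 (x : ℝ) : ℝ := min |x| |x - 1|

/-- A function is Boolean on the multislice if it takes values in `{0,1}` there. -/
def booleanOn (ℓ n : ℕ) (κ : Fin ℓ → ℕ) (g : (Fin n → Fin ℓ) → ℝ) : Prop :=
  ∀ u ∈ multislice ℓ n κ, g u = 0 ∨ g u = 1

/-- A dictator: a function depending on at most one coordinate. -/
def dictator (ℓ n : ℕ) (κ : Fin ℓ → ℕ) (g : (Fin n → Fin ℓ) → ℝ) : Prop :=
  ∃ j : Fin n, ∀ u ∈ multislice ℓ n κ, ∀ v ∈ multislice ℓ n κ, u j = v j → g u = g v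

/-!
Let `f` be Boolean on the `k`-subsets of `V` and let `ε` be its squared distance to
`g A = c + ∑ j ∈ A, a j`. On a subcube of the slice, obtained by choosing one element from each of
`k` disjoint pairs, the character `exp (2πi g)` is nearly `1` on average because `f` is an integer,
while its average factors into cosines of `π` times the differences of `a` along the pairs.
Averaging over all subcubes shows that these differences are close to integers in mean square, so
that subtracting a common value `b` from `a` and rounding gives an integer-valued
`Y A = m + ∑ j ∈ A, w j` with `𝔼 (f - Y)² = O(ε)`.

Since `Y` takes integer values, `𝔼 Y (Y - 1) ≤ 2 𝔼 (f - Y)²`. If `0` is a median of `w`, a variance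
bound then leaves only `m = 0` or `m = 1`; the second case becomes the first on replacing `f` by
`1 - f`. For `m = 0` the exact formula for `𝔼 Y (Y - 1)` bounds both `∑ w j (w j - 1)`, which forces
`w` to be nearly an indicator, and `(∑ w j) (∑ w j - 1)`, which bounds the size of
`S = {j | 1 ≤ w j}`.
-/

open scoped BigOperators

section Averaging

variable {G X Y : Type*} [Group G] [MulAction G X] [MulAction G Y]

lemma expect_smul_eq_expect [Fintype G] {t : Finset Y}
    (ht : ∀ y ∈ t, ∀ z, z ∈ t ↔ ∃ g : G, g • y = z) (F : Y → ℝ) {y : Y} (hy : y ∈ t) :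
    𝔼 g : G, F (g • y) = 𝔼 z ∈ t, F z := by
  have base_point : ∀ z ∈ t, 𝔼 g : G, F (g • z) = 𝔼 g : G, F (g • y) := by
    intro z hz
    obtain ⟨h, rfl⟩ := (ht y hy z).1 hz
    exact Fintype.expect_equiv (Equiv.mulRight h) _ _ fun g ↦ by simp [mul_smul]
  have smul_mem (g : G) : ∀ z ∈ t, g • z ∈ t := fun z hz ↦ (ht z hz _).2 ⟨g, rfl⟩
  have translate (g : G) : 𝔼 z ∈ t, F (g • z) = 𝔼 z ∈ t, F z :=
    expect_nbij' (g • ·) (g⁻¹ • ·) (smul_mem g) (smul_mem g⁻¹) (by simp) (by simp) (by simp)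
  calc 𝔼 g : G, F (g • y)
      = 𝔼 z ∈ t, 𝔼 g : G, F (g • z) := by
        rw [expect_congr rfl base_point, expect_const ⟨y, hy⟩]
    _ = 𝔼 z ∈ t, F z := by
        rw [expect_comm, expect_congr rfl fun g _ ↦ translate g, Fintype.expect_const]

lemma expect_comp_eq_expect_of_equivariant [Finite G] [Fintype X] [Nonempty X] {t : Finset Y}
    (ht : ∀ y ∈ t, ∀ z, z ∈ t ↔ ∃ g : G, g • y = z) {p : X → Y}
    (hp : ∀ (g : G) x, p (g • x) = g • p x) (hpt : ∀ x, p x ∈ t) (F : Y → ℝ) :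
    𝔼 x, F (p x) = 𝔼 y ∈ t, F y := by
  have := Fintype.ofFinite G
  have translate (g : G) : 𝔼 x, F (p (g • x)) = 𝔼 x, F (p x) :=
    Fintype.expect_equiv (MulAction.toPerm g) _ _ fun _ ↦ rfl
  calc 𝔼 x, F (p x)
      = 𝔼 x, 𝔼 g : G, F (g • p x) := by
        rw [expect_comm]
        simp only [← hp, translate, Fintype.expect_const]
    _ = 𝔼 y ∈ t, F y := by
        simp only [expect_smul_eq_expect ht F (hpt _), Fintype.expect_const]

end Averaging

section Embeddings

variable {ι V : Type*} [Fintype ι] [Fintype V] [Nonempty (ι ↪ V)]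

open scoped Pointwise in
lemma expect_embedding_map (B : Finset ι) (F : Finset V → ℝ) :
    𝔼 φ : ι ↪ V, F (B.map φ) = 𝔼 A ∈ powersetCard #B univ, F A := by
  classical
  refine expect_comp_eq_expect_of_equivariant (G := Equiv.Perm V) (p := fun φ : ι ↪ V ↦ B.map φ)
    (fun A hA A' ↦ ?_) (fun g φ ↦ ?_) (fun φ ↦ by simp) F
  · rw [mem_powersetCard_univ] at hA
    rw [mem_powersetCard_univ, ← hA]
    constructor
    · intro h
      obtain ⟨g, hg⟩ := Equiv.Perm.exists_map_finset_eq A A' h.symm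
      exact ⟨g, by rw [← hg, map_eq_image]; rfl⟩
    · rintro ⟨g, rfl⟩
      exact card_smul_finset g A
  · ext x
    simp [mem_smul_finset]

lemma expect_embedding_apply_apply {i j : ι} (hij : i ≠ j) (F : V × V → ℝ) :
    𝔼 φ : ι ↪ V, F (φ i, φ j) = 𝔼 x ∈ univ.offDiag, F x := by
  refine expect_comp_eq_expect_of_equivariant (G := Equiv.Perm V)
    (p := fun φ : ι ↪ V ↦ (φ i, φ j)) (fun x hx y ↦ ?_) (fun g φ ↦ rfl)
    (fun φ ↦ by simpa using hij) F
  simp only [mem_offDiag, mem_univ, true_and] at hx ⊢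
  constructor
  · intro hy
    obtain ⟨g, h₁, h₂⟩ := MulAction.is_two_pretransitive_iff.1
      (Equiv.Perm.isMultiplyPretransitive V 2) hx hy
    exact ⟨g, Prod.ext h₁ h₂⟩
  · rintro ⟨g, rfl⟩
    simpa using hx

lemma expect_embedding_apply (i : ι) (F : V → ℝ) :
    𝔼 φ : ι ↪ V, F (φ i) = 𝔼 x, F x := by
  refine expect_comp_eq_expect_of_equivariant (G := Equiv.Perm V) (p := fun φ : ι ↪ V ↦ φ i)
    (fun x _ y ↦ ?_) (fun g φ ↦ rfl) (fun φ ↦ mem_univ _) F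
  simpa using MulAction.exists_smul_eq (Equiv.Perm V) x y

end Embeddings

section SliceMoments

variable {V : Type*} [Fintype V] {k : ℕ}

lemma expect_powersetCard_eq_expect_embedding [Nonempty (Fin k ↪ V)] (F : Finset V → ℝ) :
    𝔼 A ∈ powersetCard k univ, F A = 𝔼 φ : Fin k ↪ V, F (univ.map φ) := by
  simp [expect_embedding_map]

lemma nonempty_embedding_fin (hk : k ≤ Fintype.card V) : Nonempty (Fin k ↪ V) :=
  Function.Embedding.nonempty_of_card_le (by simpa using hk)

lemma expect_sum_powersetCard (hk : k ≤ Fintype.card V) (w : V → ℝ) :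
    𝔼 A ∈ powersetCard k univ, ∑ j ∈ A, w j = k / Fintype.card V * ∑ j, w j := by
  have := nonempty_embedding_fin hk
  simp only [expect_powersetCard_eq_expect_embedding, sum_map, expect_sum_comm,
    expect_embedding_apply, sum_const, card_univ, Fintype.card_fin, nsmul_eq_mul]
  rw [Fintype.expect_eq_sum_div_card]
  ring

lemma expect_offDiag_mul (w : V → ℝ) :
    𝔼 x ∈ univ.offDiag, w x.1 * w x.2 =
      ((∑ j, w j) ^ 2 - ∑ j, w j ^ 2) / (Fintype.card V * (Fintype.card V - 1)) := by
  classical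
  have split : (∑ j, w j) ^ 2 = ∑ j, w j ^ 2 + ∑ x ∈ univ.offDiag, w x.1 * w x.2 := by
    rw [sq, sum_mul_sum, ← sum_product', ← diag_union_offDiag,
      sum_union (disjoint_diag_offDiag _), sum_diag]
    simp [sq]
  rw [expect_eq_sum_div_card, split, add_sub_cancel_left, offDiag_card, card_univ,
    Nat.cast_sub (Nat.le_mul_self _)]
  push_cast
  ring

lemma expect_sq_sum_powersetCard [Nontrivial V] (hk : k ≤ Fintype.card V) (w : V → ℝ) :
    𝔼 A ∈ powersetCard k univ, (∑ j ∈ A, w j) ^ 2 =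
      k / Fintype.card V * ((Fintype.card V - k) / (Fintype.card V - 1) * ∑ j, w j ^ 2 +
        (k - 1) / (Fintype.card V - 1) * (∑ j, w j) ^ 2) := by
  have := nonempty_embedding_fin hk
  have hn : (1 : ℝ) < Fintype.card V := by exact_mod_cast Fintype.one_lt_card
  have pair (i j : Fin k) : 𝔼 φ : Fin k ↪ V, w (φ i) * w (φ j) =
      𝔼 x ∈ univ.offDiag, w x.1 * w x.2 +
        if i = j then 𝔼 x, w x ^ 2 - 𝔼 x ∈ univ.offDiag, w x.1 * w x.2 else 0 := by
    split_ifs with hij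
    · subst hij
      simpa [← sq] using expect_embedding_apply i fun x ↦ w x ^ 2
    · simpa using expect_embedding_apply_apply hij fun x ↦ w x.1 * w x.2
  simp only [expect_powersetCard_eq_expect_embedding, sum_map, sq (∑ _ : Fin k, _), sum_mul_sum,
    expect_sum_comm, pair, sum_add_distrib, sum_ite_eq, mem_univ, if_true, sum_const, card_univ,
    Fintype.card_fin, nsmul_eq_mul, expect_offDiag_mul]
  rw [Fintype.expect_eq_sum_div_card]
  have := (sub_pos.2 hn).ne'
  field_simp
  ring

lemma expect_sq_sum_sub_mean [Nontrivial V] (hk : k ≤ Fintype.card V) (w : V → ℝ) :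
    𝔼 A ∈ powersetCard k univ, (∑ j ∈ A, w j - k / Fintype.card V * ∑ j, w j) ^ 2 =
      k / Fintype.card V * ((Fintype.card V - k) / (Fintype.card V - 1) *
        (∑ j, w j ^ 2 - (∑ j, w j) ^ 2 / Fintype.card V)) := by
  simp only [sub_sq, expect_add_distrib, expect_sub_distrib, ← expect_mul, ← mul_expect,
    expect_sum_powersetCard hk, expect_sq_sum_powersetCard hk,
    expect_const (powersetCard_nonempty.2 hk)]
  have hn : (1 : ℝ) < Fintype.card V := by exact_mod_cast Fintype.one_lt_card
  have := (sub_pos.2 hn).ne'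
  field_simp
  ring

lemma expect_sq_sum_sub_mean_le [Nontrivial V] (hk : 1 ≤ k) (hkn : k ≤ Fintype.card V)
    (w : V → ℝ) :
    𝔼 A ∈ powersetCard k univ, (∑ j ∈ A, w j - k / Fintype.card V * ∑ j, w j) ^ 2 ≤
      k / Fintype.card V * ∑ j, w j ^ 2 := by
  have hk' : (1 : ℝ) ≤ k := mod_cast hk
  have hkn' : (k : ℝ) ≤ Fintype.card V := mod_cast hkn
  have hn : (1 : ℝ) < Fintype.card V := by exact_mod_cast Fintype.one_lt_card
  have ratio_le : (Fintype.card V - k : ℝ) / (Fintype.card V - 1) ≤ 1 := by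
    rw [div_le_one] <;> linarith
  have : 0 ≤ (Fintype.card V - k : ℝ) / (Fintype.card V - 1) :=
    div_nonneg (by linarith) (by linarith)
  rw [expect_sq_sum_sub_mean hkn]
  gcongr
  calc _ ≤ (Fintype.card V - k : ℝ) / (Fintype.card V - 1) * ∑ j, w j ^ 2 := by
        gcongr
        exact sub_le_self _ (by positivity)
    _ ≤ ∑ j, w j ^ 2 := mul_le_of_le_one_left (by positivity) ratio_le

end SliceMoments

section Cube

variable {ι : Type*} [Fintype ι]

lemma abs_cos_pi_mul_le (x : ℝ) :
    |Real.cos (Real.pi * x)| ≤ Real.exp (-2 * (x - round x) ^ 2) := by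
  set t := x - round x
  have periodic : |Real.cos (Real.pi * x)| = |Real.cos (Real.pi * t)| := by
    have : Real.pi * t = Real.pi * x - round x * Real.pi := by simp only [t]; ring
    rw [this, Real.cos_sub_int_mul_pi, abs_mul]
    simp
  have ht : |Real.pi * t| ≤ Real.pi / 2 := by
    rw [abs_mul, abs_of_pos Real.pi_pos]
    nlinarith [abs_sub_round x, Real.pi_pos]
  rw [periodic, abs_of_nonneg (Real.cos_nonneg_of_mem_Icc (abs_le.1 ht))]
  calc Real.cos (Real.pi * t) ≤ 1 - 2 / Real.pi ^ 2 * (Real.pi * t) ^ 2 :=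
        Real.cos_le_one_sub_mul_cos_sq (ht.trans (by linarith [Real.pi_pos]))
    _ = 1 - 2 * t ^ 2 := by field_simp
    _ ≤ Real.exp (-2 * t ^ 2) := by
      simpa using Real.one_sub_le_exp_neg (2 * t ^ 2)

lemma norm_exp_mul_I_add_exp_mul_I (x y : ℝ) :
    ‖(Complex.exp (x * Complex.I) + Complex.exp (y * Complex.I)) / 2‖ =
      |Real.cos ((x - y) / 2)| := by
  have factor : (Complex.exp (x * Complex.I) + Complex.exp (y * Complex.I)) / 2 =
      Complex.exp (((x + y) / 2 : ℝ) * Complex.I) * (Real.cos ((x - y) / 2) : ℝ) := by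
    rw [Complex.ofReal_cos, Complex.cos, mul_div_assoc', mul_add, ← Complex.exp_add,
      ← Complex.exp_add]
    push_cast
    ring_nf
  rw [factor, norm_mul, Complex.norm_exp_ofReal_mul_I, one_mul, Complex.norm_real,
    Real.norm_eq_abs]

/-- The character of `Bool` with value `1` at `true` and `-1` at `false`. -/
def boolSign (s : Bool) : ℝ := if s then 1 else -1

lemma boolSign_not (s : Bool) : boolSign (!s) = -boolSign s := by
  cases s <;> simp [boolSign]

lemma boolSign_mul_self (s : Bool) : boolSign s * boolSign s = 1 := by
  cases s <;> simp [boolSign]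

lemma add_sum_bool_eq (c : ℝ) (b : ι → Bool → ℝ) (r : ι → Bool) :
    c + ∑ i, b i (r i) = c + ∑ i, (b i true + b i false) / 2 +
      ∑ i, (b i true - b i false) / 2 * boolSign (r i) := by
  rw [add_assoc, ← sum_add_distrib]
  congr! 2 with i
  cases r i <;> simp only [boolSign, Bool.false_eq_true, if_true, if_false] <;> ring

variable [DecidableEq ι]

lemma expect_bool_prod (u : ι → Bool → ℂ) :
    𝔼 r : ι → Bool, ∏ i, u i (r i) = ∏ i, (u i true + u i false) / 2 := by
  simp only [← Fintype.sum_bool (u _), prod_div_distrib, prod_univ_sum, Fintype.piFinset_univ,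
    Fintype.expect_eq_sum_div_card]
  simp

lemma expect_cos_le (c : ℝ) (b : ι → Bool → ℝ) :
    𝔼 r : ι → Bool, Real.cos (2 * Real.pi * (c + ∑ i, b i (r i))) ≤
      ∏ i, |Real.cos (Real.pi * (b i true - b i false))| := by
  set θ : ι → Bool → ℝ := fun i s ↦ 2 * Real.pi * b i s
  have re_eq (r : ι → Bool) : Real.cos (2 * Real.pi * (c + ∑ i, b i (r i))) =
      (Complex.exp ((2 * Real.pi * c : ℝ) * Complex.I) *
        ∏ i, Complex.exp (θ i (r i) * Complex.I)).re := by
    rw [← Complex.exp_sum, ← Complex.exp_add, ← sum_mul, ← Complex.ofReal_sum, ← add_mul,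
      ← Complex.ofReal_add, Complex.exp_ofReal_mul_I_re, mul_add, mul_sum]
  calc 𝔼 r : ι → Bool, Real.cos (2 * Real.pi * (c + ∑ i, b i (r i)))
      = (𝔼 r : ι → Bool, Complex.exp ((2 * Real.pi * c : ℝ) * Complex.I) *
          ∏ i, Complex.exp (θ i (r i) * Complex.I)).re := by
        simp only [re_eq, Complex.re_expect]
    _ ≤ ‖𝔼 r : ι → Bool, Complex.exp ((2 * Real.pi * c : ℝ) * Complex.I) *
          ∏ i, Complex.exp (θ i (r i) * Complex.I)‖ := Complex.re_le_norm _
    _ = ∏ i, |Real.cos (Real.pi * (b i true - b i false))| := by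
        rw [← mul_expect, expect_bool_prod fun i s ↦ Complex.exp (θ i s * Complex.I), norm_mul,
          Complex.norm_exp_ofReal_mul_I, one_mul, norm_prod]
        refine prod_congr rfl fun i _ ↦ ?_
        rw [norm_exp_mul_I_add_exp_mul_I]
        simp only [θ]
        ring_nf

lemma expect_eq_zero_of_flip (i : ι) {F : (ι → Bool) → ℝ}
    (hF : ∀ r, F (Function.update r i (!r i)) = -F r) : 𝔼 r, F r = 0 := by
  have involutive : Function.Involutive fun r : ι → Bool ↦ Function.update r i (!r i) := by
    intro r
    simp
  have : 𝔼 r, F r = 𝔼 r, -F r :=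
    (Fintype.expect_equiv involutive.toPerm _ _ fun r ↦ (hF r).symm).symm
  rw [expect_neg_distrib] at this
  linarith

lemma expect_sq_add_sum_boolSign (c : ℝ) (e : ι → ℝ) :
    𝔼 r : ι → Bool, (c + ∑ i, e i * boolSign (r i)) ^ 2 = c ^ 2 + ∑ i, e i ^ 2 := by
  have single (i : ι) : 𝔼 r : ι → Bool, boolSign (r i) = 0 :=
    expect_eq_zero_of_flip i fun r ↦ by simp [boolSign_not]
  have pair (i j : ι) :
      𝔼 r : ι → Bool, boolSign (r i) * boolSign (r j) = if i = j then 1 else 0 := by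
    split_ifs with hij
    · simp [hij, boolSign_mul_self]
    · exact expect_eq_zero_of_flip i fun r ↦ by simp [Ne.symm hij, boolSign_not]
  simp only [add_sq, sq (∑ i, e i * _), sum_mul_sum, mul_mul_mul_comm (e _), expect_add_distrib,
    ← mul_expect, expect_sum_comm, single, pair, Fintype.expect_const]
  simp [sq]

variable {f : (ι → Bool) → ℝ}

lemma sum_sq_sub_le_of_boolean (hf : ∀ r, f r = 0 ∨ f r = 1) (c : ℝ)
    (b : ι → Bool → ℝ) :
    ∑ i, (b i true - b i false) ^ 2 ≤ 2 + 8 * 𝔼 r, (f r - (c + ∑ i, b i (r i))) ^ 2 := by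
  set g : (ι → Bool) → ℝ := fun r ↦ c + ∑ i, b i (r i) with hg
  have pointwise (r : ι → Bool) : (g r - 1 / 2) ^ 2 ≤ 1 / 2 + 2 * (f r - g r) ^ 2 := by
    rcases hf r with h | h <;> rw [h]
    · nlinarith [sq_nonneg (g r + 1 / 2)]
    · nlinarith [sq_nonneg (g r - 3 / 2)]
  have variance : ∑ i, ((b i true - b i false) / 2) ^ 2 ≤ 𝔼 r, (g r - 1 / 2) ^ 2 := by
    simp only [hg, add_sum_bool_eq c b, add_sub_right_comm]
    rw [expect_sq_add_sum_boolSign]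
    exact le_add_of_nonneg_left (sq_nonneg _)
  have averaged := variance.trans (expect_le_expect fun r _ ↦ pointwise r)
  rw [expect_add_distrib, ← mul_expect, Fintype.expect_const] at averaged
  simp only [div_pow, ← sum_div] at averaged
  linarith

lemma one_sub_le_exp_of_boolean (hf : ∀ r, f r = 0 ∨ f r = 1) (c : ℝ)
    (b : ι → Bool → ℝ) :
    1 - 20 * 𝔼 r, (f r - (c + ∑ i, b i (r i))) ^ 2 ≤
      Real.exp (-2 * ∑ i, (b i true - b i false - round (b i true - b i false)) ^ 2) := by
  set g : (ι → Bool) → ℝ := fun r ↦ c + ∑ i, b i (r i)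
  have pointwise (r : ι → Bool) : 1 - 20 * (f r - g r) ^ 2 ≤ Real.cos (2 * Real.pi * g r) := by
    have : Real.cos (2 * Real.pi * g r) = Real.cos (2 * Real.pi * (f r - g r)) := by
      rcases hf r with h | h <;> rw [h]
      · rw [zero_sub, mul_neg, Real.cos_neg]
      · rw [mul_sub, mul_one, Real.cos_two_pi_sub]
    rw [this]
    have pi_sq : Real.pi ^ 2 ≤ 10 := by nlinarith [Real.pi_lt_d2, Real.pi_pos]
    refine le_trans ?_ Real.one_sub_sq_div_two_le_cos
    rw [mul_pow, mul_pow]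
    nlinarith [sq_nonneg (f r - g r)]
  calc 1 - 20 * 𝔼 r, (f r - g r) ^ 2
      = 𝔼 r, (1 - 20 * (f r - g r) ^ 2) := by
        rw [expect_sub_distrib, ← mul_expect, Fintype.expect_const]
    _ ≤ 𝔼 r, Real.cos (2 * Real.pi * g r) := expect_le_expect fun r _ ↦ pointwise r
    _ ≤ ∏ i, |Real.cos (Real.pi * (b i true - b i false))| := expect_cos_le c b
    _ ≤ ∏ i, Real.exp (-2 * (b i true - b i false - round (b i true - b i false)) ^ 2) := by
        gcongr with i
        exact abs_cos_pi_mul_le _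
    _ = _ := by rw [← Real.exp_sum, mul_sum]

lemma sum_sq_sub_round_le_of_boolean (hf : ∀ r, f r = 0 ∨ f r = 1) (c : ℝ)
    (b : ι → Bool → ℝ) :
    ∑ i, (b i true - b i false - round (b i true - b i false)) ^ 2 ≤
      100 * 𝔼 r, (f r - (c + ∑ i, b i (r i))) ^ 2 := by
  have second_moment := sum_sq_sub_le_of_boolean hf c b
  have character := one_sub_le_exp_of_boolean hf c b
  set η := 𝔼 r, (f r - (c + ∑ i, b i (r i))) ^ 2
  set v := ∑ i, (b i true - b i false - round (b i true - b i false)) ^ 2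
  have hv0 : 0 ≤ v := by positivity
  rcases le_total (1 / 40) η with hη | hη
  · have : v ≤ ∑ i, (b i true - b i false) ^ 2 :=
      sum_le_sum fun i _ ↦ sq_le_sq.2 (by simpa using round_le (b i true - b i false) 0)
    linarith
  · have exp_le : Real.exp (-2 * v) * (1 + 2 * v) ≤ 1 := by
      calc Real.exp (-2 * v) * (1 + 2 * v) ≤ Real.exp (-2 * v) * Real.exp (2 * v) := by
            gcongr
            linarith [Real.add_one_le_exp (2 * v)]
        _ = 1 := by rw [← Real.exp_add]; simp
    nlinarith

end Cube

section Rounding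

lemma sq_int_sub_round_le (q : ℤ) (x : ℝ) : (q - round x : ℝ) ^ 2 ≤ 4 * (q - x) ^ 2 := by
  have : |(q : ℝ) - round x| ≤ 2 * |q - x| := by
    calc |(q : ℝ) - round x| ≤ |q - x| + |x - round x| := abs_sub_le _ _ _
      _ ≤ 2 * |q - x| := by
        rw [abs_sub_comm (q : ℝ)]
        linarith [round_le x q]
  calc (q - round x : ℝ) ^ 2 = |(q : ℝ) - round x| ^ 2 := (sq_abs _).symm
    _ ≤ (2 * |q - x|) ^ 2 := by gcongr
    _ = 4 * (q - x) ^ 2 := by rw [mul_pow, sq_abs]; norm_num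

lemma sq_sub_int_le_of_round {V : Type*} {k : ℕ} {A : Finset V} (hA : #A = k) (y : ℤ)
    (c b ν : ℝ) (a : V → ℝ) :
    (y - (round (c + k * b + ν) + ∑ j ∈ A, (round (a j - b) : ℝ))) ^ 2 ≤
      8 * (y - (c + ∑ j ∈ A, a j)) ^ 2 +
        8 * (∑ j ∈ A, (a j - b - round (a j - b)) - ν) ^ 2 := by
  set q : ℤ := y - ∑ j ∈ A, round (a j - b) with hq
  have decomposition : (q : ℝ) - (c + k * b + ν) =
      (y - (c + ∑ j ∈ A, a j)) + (∑ j ∈ A, (a j - b - round (a j - b)) - ν) := by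
    simp only [hq, sum_sub_distrib, sum_const, hA, nsmul_eq_mul]
    push_cast
    ring
  calc (y - (round (c + k * b + ν) + ∑ j ∈ A, (round (a j - b) : ℝ))) ^ 2
      = (q - round (c + k * b + ν)) ^ 2 := by
        push_cast [hq]
        ring
    _ ≤ 4 * (q - (c + k * b + ν)) ^ 2 := sq_int_sub_round_le q _
    _ ≤ _ := by
        rw [decomposition]
        linarith [add_sq_le (a := y - (c + ∑ j ∈ A, a j))
          (b := ∑ j ∈ A, (a j - b - round (a j - b)) - ν)]

variable {V : Type*} [Fintype V] {k : ℕ} {f : Finset V → ℝ}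

/-- The graph of `r`, as a set of `k` elements of `Fin k × Bool`. An embedding of `Fin k × Bool`
into `V` carries these graphs to the vertices of a `k`-dimensional subcube of the slice. -/
def cubeVertex (r : Fin k → Bool) : Finset (Fin k × Bool) :=
  univ.map ⟨fun i ↦ (i, r i), fun _ _ h ↦ congrArg Prod.fst h⟩

lemma card_cubeVertex (r : Fin k → Bool) : #(cubeVertex r) = k := by
  simp [cubeVertex]

lemma sum_cubeVertex (r : Fin k → Bool) (F : Fin k × Bool → ℝ) :
    ∑ p ∈ cubeVertex r, F p = ∑ i, F (i, r i) := by
  rw [cubeVertex, sum_map]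
  rfl

lemma expect_sq_sub_round_offDiag_le (hkn : 2 * k ≤ Fintype.card V)
    (hf : ∀ A ∈ powersetCard k univ, f A = 0 ∨ f A = 1) (c : ℝ) (a : V → ℝ) :
    k * 𝔼 x ∈ univ.offDiag, (a x.1 - a x.2 - round (a x.1 - a x.2)) ^ 2 ≤
      100 * 𝔼 A ∈ powersetCard k univ, (f A - (c + ∑ j ∈ A, a j)) ^ 2 := by
  have : Nonempty (Fin k × Bool ↪ V) :=
    Function.Embedding.nonempty_of_card_le (by simpa [mul_comm] using hkn)
  have subcube (φ : Fin k × Bool ↪ V) :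
      ∑ i, (a (φ (i, true)) - a (φ (i, false)) - round (a (φ (i, true)) - a (φ (i, false)))) ^ 2 ≤
        100 * 𝔼 r : Fin k → Bool, (f ((cubeVertex r).map φ) -
          (c + ∑ j ∈ (cubeVertex r).map φ, a j)) ^ 2 := by
    simpa only [sum_map, sum_cubeVertex] using sum_sq_sub_round_le_of_boolean
      (f := fun r ↦ f ((cubeVertex r).map φ))
      (fun r ↦ hf _ (by simp [card_cubeVertex])) c fun i s ↦ a (φ (i, s))
  have averaged := expect_le_expect fun φ (_ : φ ∈ univ) ↦ subcube φ
  have edge (i : Fin k) := expect_embedding_apply_apply (V := V) (i := (i, true)) (j := (i, false))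
    (by simp) fun x ↦ (a x.1 - a x.2 - round (a x.1 - a x.2)) ^ 2
  have vertex (r : Fin k → Bool) := expect_embedding_map (V := V) (cubeVertex r)
    fun A ↦ (f A - (c + ∑ j ∈ A, a j)) ^ 2
  rw [← mul_expect, expect_comm, expect_sum_comm] at averaged
  simpa only [edge, vertex, card_cubeVertex, sum_const, card_univ, Fintype.card_fin, nsmul_eq_mul,
    Fintype.expect_const] using averaged

lemma exists_center_sum_sq_sub_round_le [Nonempty V] (hkn : 2 * k ≤ Fintype.card V)
    (hf : ∀ A ∈ powersetCard k univ, f A = 0 ∨ f A = 1) (c : ℝ) (a : V → ℝ) :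
    ∃ b, k / Fintype.card V * ∑ j, (a j - b - round (a j - b)) ^ 2 ≤
      100 * 𝔼 A ∈ powersetCard k univ, (f A - (c + ∑ j ∈ A, a j)) ^ 2 := by
  classical
  set δ : V × V → ℝ := fun x ↦ (a x.1 - a x.2 - round (a x.1 - a x.2)) ^ 2
  set E := 𝔼 x ∈ univ.offDiag, δ x
  have hE0 : 0 ≤ E := expect_nonneg fun x _ ↦ by positivity
  have hn : (0 : ℝ) < Fintype.card V := mod_cast Fintype.card_pos
  have mean : 𝔼 y, ∑ x, δ (x, y) ≤ Fintype.card V * E := by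
    have diag : ∑ x ∈ univ.diag, δ x = 0 := sum_eq_zero fun x hx ↦ by
      simp [δ, (mem_diag.1 hx).2]
    have offDiag : ∑ y, ∑ x, δ (x, y) = (Fintype.card V * (Fintype.card V - 1)) * E := by
      rw [sum_comm, ← sum_product', ← diag_union_offDiag, sum_union (disjoint_diag_offDiag _), diag,
        zero_add, ← card_mul_expect, offDiag_card, card_univ, Nat.cast_sub (Nat.le_mul_self _)]
      push_cast
      ring
    rw [Fintype.expect_eq_sum_div_card, offDiag, div_le_iff₀ hn]
    nlinarith
  obtain ⟨b, -, hb⟩ := exists_le_of_expect_le univ_nonempty mean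
  refine ⟨a b, le_trans ?_ (expect_sq_sub_round_offDiag_le hkn hf c a)⟩
  calc k / Fintype.card V * ∑ j, δ (j, b) ≤ k / Fintype.card V * (Fintype.card V * E) := by gcongr
    _ = k * E := by field_simp

lemma exists_int_approx [Nontrivial V] (hk : 1 ≤ k) (hkn : 2 * k ≤ Fintype.card V)
    (hf : ∀ A ∈ powersetCard k univ, f A = 0 ∨ f A = 1) (c : ℝ) (a : V → ℝ) :
    ∃ (m : ℤ) (w : V → ℤ),
      𝔼 A ∈ powersetCard k univ, (f A - (m + ∑ j ∈ A, w j : ℤ)) ^ 2 ≤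
        1000 * 𝔼 A ∈ powersetCard k univ, (f A - (c + ∑ j ∈ A, a j)) ^ 2 := by
  obtain ⟨b, hb⟩ := exists_center_sum_sq_sub_round_le hkn hf c a
  set e : V → ℝ := fun j ↦ a j - b - round (a j - b)
  set ν : ℝ := k / Fintype.card V * ∑ j, e j
  refine ⟨round (c + k * b + ν), fun j ↦ round (a j - b), ?_⟩
  push_cast
  have pointwise : ∀ A ∈ powersetCard k (univ : Finset V),
      (f A - (round (c + k * b + ν) + ∑ j ∈ A, (round (a j - b) : ℝ))) ^ 2 ≤
        8 * (f A - (c + ∑ j ∈ A, a j)) ^ 2 + 8 * (∑ j ∈ A, e j - ν) ^ 2 := by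
    intro A hA
    obtain ⟨y, hy⟩ : ∃ y : ℤ, f A = y := by
      rcases hf A hA with h | h
      · exact ⟨0, by simpa using h⟩
      · exact ⟨1, by simpa using h⟩
    rw [hy]
    exact sq_sub_int_le_of_round (mem_powersetCard_univ.1 hA) y c b ν a
  have averaged := expect_le_expect pointwise
  rw [expect_add_distrib, ← mul_expect, ← mul_expect] at averaged
  have hε : 0 ≤ 𝔼 A ∈ powersetCard k univ, (f A - (c + ∑ j ∈ A, a j)) ^ 2 :=
    expect_nonneg fun A _ ↦ sq_nonneg _
  linarith [expect_sq_sum_sub_mean_le hk (by lia) e]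

end Rounding

section Median

variable {V : Type*} [Fintype V] [Nonempty V]

lemma exists_median {α : Type*} [LinearOrder α] (w : V → α) :
    ∃ t, 2 * #{j | w j < t} ≤ Fintype.card V ∧ 2 * #{j | t < w j} ≤ Fintype.card V := by
  obtain ⟨a, -, ha⟩ := exists_min_image univ w univ_nonempty
  have low_nonempty : ({b | 2 * #{j | w j < w b} ≤ Fintype.card V} : Finset V).Nonempty :=
    ⟨a, by simp [filter_eq_empty_iff.2 fun j _ ↦ not_lt.2 (ha j (mem_univ j))]⟩
  obtain ⟨b, hb, b_max⟩ := exists_max_image _ w low_nonempty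
  rw [mem_filter_univ] at hb
  refine ⟨w b, hb, ?_⟩
  by_contra! many
  have above_nonempty : ({j | w b < w j} : Finset V).Nonempty := card_pos.1 (by lia)
  obtain ⟨d, hd, d_min⟩ := exists_min_image _ w above_nonempty
  have below_d : #{j | w j < w d} ≤ #{j | ¬ w b < w j} := by
    gcongr with j
    exact fun hjd hbj ↦ (d_min j (by rwa [mem_filter_univ])).not_gt hjd
  have total := card_filter_add_card_filter_not (s := univ) fun j ↦ w b < w j
  rw [card_univ] at total
  exact (b_max d (by rw [mem_filter_univ]; lia)).not_gt ((mem_filter_univ d).1 hd)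

lemma exists_balanced_recentring (k : ℕ) (m : ℤ) (w : V → ℤ) :
    ∃ (m' : ℤ) (w' : V → ℤ), 2 * #{j | w' j < 0} ≤ Fintype.card V ∧
      2 * #{j | 0 < w' j} ≤ Fintype.card V ∧
        ∀ A ∈ powersetCard k univ, m + ∑ j ∈ A, w j = m' + ∑ j ∈ A, w' j := by
  obtain ⟨t, hlow, hhigh⟩ := exists_median w
  refine ⟨m + k * t, fun j ↦ w j - t, by simpa using hlow, by simpa using hhigh, fun A hA ↦ ?_⟩
  rw [sum_sub_distrib, sum_const, mem_powersetCard_univ.1 hA, nsmul_eq_mul]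
  ring

end Median

section IntegerValued

variable {V : Type*} [Fintype V] {k : ℕ}

lemma expect_add_sum_mul_sub_one [Nontrivial V] (hk : k ≤ Fintype.card V) (m : ℝ) (w : V → ℝ) :
    𝔼 A ∈ powersetCard k univ, (m + ∑ j ∈ A, w j) * (m + ∑ j ∈ A, w j - 1) =
      (m - 1 / 2 + k / Fintype.card V * ∑ j, w j) ^ 2 - 1 / 4 +
        k / Fintype.card V * ((Fintype.card V - k) / (Fintype.card V - 1) *
          (∑ j, w j ^ 2 - (∑ j, w j) ^ 2 / Fintype.card V)) := by
  have around_mean (A : Finset V) : (m + ∑ j ∈ A, w j) * (m + ∑ j ∈ A, w j - 1) =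
      (m * (m - 1) - (k / Fintype.card V * ∑ j, w j) ^ 2) +
        2 * (m - 1 / 2 + k / Fintype.card V * ∑ j, w j) * ∑ j ∈ A, w j +
          (∑ j ∈ A, w j - k / Fintype.card V * ∑ j, w j) ^ 2 := by ring
  simp only [around_mean, expect_add_distrib, ← mul_expect, expect_sum_powersetCard hk,
    expect_const (powersetCard_nonempty.2 hk), expect_sq_sum_sub_mean hk]
  ring

lemma two_mul_sq_sum_le_of_card_neg_le {w : V → ℝ} (hw : 2 * #{j | w j < 0} ≤ Fintype.card V)
    (hsum : ∑ j, w j ≤ 0) : 2 * (∑ j, w j) ^ 2 ≤ Fintype.card V * ∑ j, w j ^ 2 := by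
  have hw' : 2 * (#{j | w j < 0} : ℝ) ≤ Fintype.card V := mod_cast hw
  have negative_part : ∑ j with w j < 0, w j ≤ ∑ j, w j := by
    rw [← sum_filter_add_sum_filter_not univ (fun j ↦ w j < 0)]
    exact le_add_of_nonneg_right (sum_nonneg fun j hj ↦ not_lt.1 (mem_filter.1 hj).2)
  calc 2 * (∑ j, w j) ^ 2 ≤ 2 * (∑ j with w j < 0, w j) ^ 2 := by
        gcongr 2 * ?_
        nlinarith
    _ ≤ 2 * (#{j | w j < 0} * ∑ j with w j < 0, w j ^ 2) := by
        gcongr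
        exact sq_sum_le_card_mul_sum_sq
    _ ≤ 2 * (#{j | w j < 0} * ∑ j, w j ^ 2) := by
        gcongr
        exact filter_subset _ _
    _ ≤ Fintype.card V * ∑ j, w j ^ 2 := by
        rw [← mul_assoc]
        gcongr

lemma max_neg_sum_le_of_card_neg_le [Nonempty V] {w : V → ℤ}
    (hw : 2 * #{j | w j < 0} ≤ Fintype.card V) :
    max 0 (-(∑ j, (w j : ℝ)) / 2) ≤
      ∑ j, (w j : ℝ) ^ 2 - (∑ j, (w j : ℝ)) ^ 2 / Fintype.card V := by
  have hn : (0 : ℝ) < Fintype.card V := mod_cast Fintype.card_pos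
  have cauchy_schwarz : (∑ j, (w j : ℝ)) ^ 2 / Fintype.card V ≤ ∑ j, (w j : ℝ) ^ 2 := by
    rw [div_le_iff₀' hn]
    exact sq_sum_le_card_mul_sum_sq
  rcases le_total 0 (∑ j, (w j : ℝ)) with hsum | hsum
  · rw [max_eq_left (by linarith)]
    linarith
  · have half : (∑ j, (w j : ℝ)) ^ 2 / Fintype.card V ≤ (∑ j, (w j : ℝ) ^ 2) / 2 := by
      rw [div_le_div_iff₀ hn two_pos]
      linarith [two_mul_sq_sum_le_of_card_neg_le (w := fun j ↦ (w j : ℝ)) (by simpa using hw) hsum]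
    have integrality : -∑ j, (w j : ℝ) ≤ ∑ j, (w j : ℝ) ^ 2 := by
      rw [← sum_neg_distrib]
      refine sum_le_sum fun j _ ↦ ?_
      exact_mod_cast (by simpa using Int.le_self_sq (-w j) : -w j ≤ w j ^ 2)
    rw [max_eq_right (by linarith)]
    linarith

lemma le_expect_of_two_le (hk : 1 ≤ k) (hkn : 2 * k ≤ Fintype.card V) {m : ℤ}
    (hm : 2 ≤ m) {w : V → ℤ} (hw : 2 * #{j | w j < 0} ≤ Fintype.card V) :
    7 / 64 ≤ 𝔼 A ∈ powersetCard k univ,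
      (m + ∑ j ∈ A, (w j : ℝ)) * (m + ∑ j ∈ A, (w j : ℝ) - 1) := by
  have : Nontrivial V := Fintype.one_lt_card_iff_nontrivial.1 (by lia)
  have hk' : (1 : ℝ) ≤ k := mod_cast hk
  have hkn' : (2 * k : ℝ) ≤ Fintype.card V := mod_cast hkn
  have hm' : (2 : ℝ) ≤ m := mod_cast hm
  have spread := max_neg_sum_le_of_card_neg_le hw
  rw [expect_add_sum_mul_sub_one (by lia)]
  set D := ∑ j, (w j : ℝ)
  set p : ℝ := k / Fintype.card V
  have hp : 0 ≤ p := by positivity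
  have hα : 1 / 2 ≤ (Fintype.card V - k : ℝ) / (Fintype.card V - 1) := by
    rw [div_le_div_iff₀] <;> linarith
  have variance : p * (1 / 2 * max 0 (-D / 2)) ≤
      p * ((Fintype.card V - k) / (Fintype.card V - 1) *
        (∑ j, (w j : ℝ) ^ 2 - D ^ 2 / Fintype.card V)) := by
    exact mul_le_mul_of_nonneg_left (mul_le_mul hα spread (le_max_left _ _) (by linarith)) hp
  have := mul_le_mul_of_nonneg_left (le_max_right 0 (-D / 2)) hp
  -- `7 / 64` is the minimum of `y ↦ (3 / 2 + y) ^ 2 - 1 / 4 - y / 4`, attained at `y = -11 / 8`.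
  nlinarith [sq_nonneg (m - 1 / 2 + p * D - 1 / 8)]

lemma eq_zero_or_one_of_expect_lt (hk : 1 ≤ k) (hkn : 2 * k ≤ Fintype.card V) {m : ℤ} {w : V → ℤ}
    (hneg : 2 * #{j | w j < 0} ≤ Fintype.card V) (hpos : 2 * #{j | 0 < w j} ≤ Fintype.card V)
    (h : 𝔼 A ∈ powersetCard k univ,
      (m + ∑ j ∈ A, (w j : ℝ)) * (m + ∑ j ∈ A, (w j : ℝ) - 1) < 7 / 64) : m = 0 ∨ m = 1 := by
  by_contra! hm
  rcases (by lia : 2 ≤ m ∨ 2 ≤ 1 - m) with hm | hm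
  · exact h.not_ge (le_expect_of_two_le hk hkn hm hneg)
  · refine h.not_ge ((le_expect_of_two_le hk hkn hm (w := -w) ?_).trans_eq ?_)
    · simpa using hpos
    · refine expect_congr rfl fun A _ ↦ ?_
      push_cast [Pi.neg_apply, sum_neg_distrib]
      ring

end IntegerValued

section Support

variable {V : Type*} {k : ℕ} {f : Finset V → ℝ} {δ : ℝ}

lemma mul_sub_one_nonneg (y : ℤ) : (0 : ℝ) ≤ y * (y - 1) := by
  rw [mul_sub_one, ← sq, sub_nonneg]
  exact_mod_cast Int.le_self_sq y

lemma mul_sub_one_le_of_boolean {x : ℝ} (hx : x = 0 ∨ x = 1) (y : ℤ) :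
    (y * (y - 1) : ℝ) ≤ 2 * (x - y) ^ 2 := by
  rcases hx with rfl | rfl
  · have := mul_sub_one_nonneg (-y)
    push_cast at this
    linarith
  · have := mul_sub_one_nonneg (y - 1)
    push_cast at this
    linarith

lemma expect_mul_sub_one_le_of_boolean {α : Type*} {s : Finset α} {f : α → ℝ}
    (hf : ∀ x ∈ s, f x = 0 ∨ f x = 1) (y : α → ℤ) :
    𝔼 x ∈ s, (y x * (y x - 1) : ℝ) ≤ 2 * 𝔼 x ∈ s, (f x - y x) ^ 2 := by
  rw [mul_expect]
  exact expect_le_expect fun x hx ↦ mul_sub_one_le_of_boolean (hf x hx) (y x)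

lemma sq_sub_indicator_le {x : ℝ} (hx : x = 0 ∨ x = 1) (w : V → ℤ) (A : Finset V) :
    (x - if ∃ j ∈ A, 1 ≤ w j then 1 else 0) ^ 2 ≤
      (x - ∑ j ∈ A, (w j : ℝ)) ^ 2 + ∑ j ∈ A, (w j * (w j - 1) : ℝ) := by
  have hR : 0 ≤ ∑ j ∈ A, (w j * (w j - 1) : ℝ) := sum_nonneg fun j _ ↦ mul_sub_one_nonneg _
  split_ifs with h
  · rcases hx with rfl | rfl
    · obtain ⟨j, hjA, hj⟩ := h
      have hj' : (1 : ℝ) ≤ w j := mod_cast hj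
      have hj_le : (w j : ℝ) ^ 2 ≤ ∑ j ∈ A, (w j : ℝ) ^ 2 :=
        single_le_sum (fun i _ ↦ sq_nonneg (w i : ℝ)) hjA
      have hY : (0 : ℝ) ≤ (∑ j ∈ A, (w j : ℝ)) * (∑ j ∈ A, (w j : ℝ) - 1) := by
        simpa using mul_sub_one_nonneg (∑ j ∈ A, w j)
      simp only [mul_sub_one, ← sq, sum_sub_distrib] at hY ⊢
      nlinarith
    · simpa using add_nonneg (sq_nonneg _) hR
  · rcases hx with rfl | rfl
    · simpa using add_nonneg (sq_nonneg _) hR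
    · push Not at h
      have hY : ∑ j ∈ A, (w j : ℝ) ≤ 0 := sum_nonpos fun j hj ↦ by
        exact_mod_cast Int.lt_add_one_iff.1 (h j hj)
      nlinarith

variable [Fintype V]

lemma expect_sum_mul_sum_sub_one [Nontrivial V] (hk : k ≤ Fintype.card V) (w : V → ℝ) :
    𝔼 A ∈ powersetCard k univ, (∑ j ∈ A, w j) * (∑ j ∈ A, w j - 1) =
      k / Fintype.card V * ((Fintype.card V - k) / (Fintype.card V - 1) * ∑ j, w j * (w j - 1) +
        (k - 1) / (Fintype.card V - 1) * ((∑ j, w j) * (∑ j, w j - 1))) := by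
  have hn : (1 : ℝ) < Fintype.card V := by exact_mod_cast Fintype.one_lt_card
  have := (sub_pos.2 hn).ne'
  simp only [mul_sub_one, ← sq, expect_sub_distrib, sum_sub_distrib,
    expect_sum_powersetCard hk, expect_sq_sum_powersetCard hk]
  field_simp
  ring

lemma sum_and_mul_sum_le_of_expect_le (hk : 2 ≤ k) (hkn : 2 * k ≤ Fintype.card V) {w : V → ℤ}
    (h : 𝔼 A ∈ powersetCard k univ, (∑ j ∈ A, (w j : ℝ)) * (∑ j ∈ A, (w j : ℝ) - 1) ≤ 2 * δ) :
    k / Fintype.card V * ∑ j, (w j * (w j - 1) : ℝ) ≤ 4 * δ ∧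
      (k / Fintype.card V : ℝ) ^ 2 * ((∑ j, (w j : ℝ)) * (∑ j, (w j : ℝ) - 1)) ≤ 4 * δ := by
  have : Nontrivial V := Fintype.one_lt_card_iff_nontrivial.1 (by lia)
  have hk' : (2 : ℝ) ≤ k := mod_cast hk
  have hkn' : (2 * k : ℝ) ≤ Fintype.card V := mod_cast hkn
  rw [expect_sum_mul_sum_sub_one (by lia)] at h
  set n : ℝ := (Fintype.card V : ℝ)
  set R := ∑ j, (w j * (w j - 1) : ℝ)
  set Q := (∑ j, (w j : ℝ)) * (∑ j, (w j : ℝ) - 1) with hQ_def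
  have hR : 0 ≤ k / n * R := mul_nonneg (by positivity) (sum_nonneg fun j _ ↦ mul_sub_one_nonneg _)
  have hQ : 0 ≤ k / n * Q := by
    refine mul_nonneg (by positivity) ?_
    simpa [hQ_def] using mul_sub_one_nonneg (∑ j, w j)
  have first_ratio : 1 / 2 ≤ (n - k) / (n - 1) := by rw [div_le_div_iff₀] <;> linarith
  have second_ratio : k / n / 2 ≤ (k - 1) / (n - 1) := by
    rw [div_div, div_le_div_iff₀] <;> nlinarith
  have R_part := mul_le_mul_of_nonneg_right first_ratio hR
  have Q_part := mul_le_mul_of_nonneg_right second_ratio hQ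
  have : 0 ≤ k / n / 2 * (k / n * Q) := mul_nonneg (by positivity) hQ
  constructor <;> linarith

lemma expect_sq_sub_indicator_le (hk : k ≤ Fintype.card V)
    (hf : ∀ A ∈ powersetCard k univ, f A = 0 ∨ f A = 1) (w : V → ℤ) :
    𝔼 A ∈ powersetCard k univ, (f A - if ∃ j ∈ A, 1 ≤ w j then 1 else 0) ^ 2 ≤
      𝔼 A ∈ powersetCard k univ, (f A - ∑ j ∈ A, (w j : ℝ)) ^ 2 +
        k / Fintype.card V * ∑ j, (w j * (w j - 1) : ℝ) := by
  rw [← expect_sum_powersetCard hk, ← expect_add_distrib]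
  exact expect_le_expect fun A hA ↦ sq_sub_indicator_le (hf A hA) w A

lemma two_mul_card_one_le (w : V → ℤ) :
    (2 * #{j | 1 ≤ w j} : ℝ) ≤ 2 * ∑ j, (w j : ℝ) + ∑ j, (w j * (w j - 1) : ℝ) := by
  rw [natCast_card_filter, mul_sum, mul_sum, ← sum_add_distrib]
  refine sum_le_sum fun j _ ↦ ?_
  split_ifs with hj
  · have : (1 : ℝ) ≤ w j := mod_cast hj
    nlinarith
  · have := mul_sub_one_nonneg (-w j)
    push_cast at this
    linarith

lemma card_le_one_or_sq_le {p : ℝ} (hp : 0 ≤ p) (hδ : δ ≤ 1) {w : V → ℤ}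
    (hR : p * ∑ j, (w j * (w j - 1) : ℝ) ≤ 4 * δ)
    (hQ : p ^ 2 * ((∑ j, (w j : ℝ)) * (∑ j, (w j : ℝ) - 1)) ≤ 4 * δ) :
    #{j | 1 ≤ w j} ≤ 1 ∨ (p * #{j | 1 ≤ w j}) ^ 2 ≤ 24 * δ := by
  refine or_iff_not_imp_left.2 fun hS ↦ ?_
  have hS' : (2 : ℝ) ≤ #{j | 1 ≤ w j} := mod_cast not_le.1 hS
  have hcard := two_mul_card_one_le w
  have hR0 : 0 ≤ ∑ j, (w j * (w j - 1) : ℝ) := sum_nonneg fun j _ ↦ mul_sub_one_nonneg _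
  set s : ℝ := ↑(#{j | 1 ≤ w j})
  set R := ∑ j, (w j * (w j - 1) : ℝ)
  have hR_sq : (p * R) ^ 2 ≤ 16 * δ := by nlinarith [mul_nonneg hp hR0]
  rcases le_or_gt (∑ j, w j) 1 with hD | hD
  · have hD' : ∑ j, (w j : ℝ) ≤ 1 := mod_cast hD
    calc (p * s) ^ 2 ≤ (p * R) ^ 2 := by gcongr; linarith
      _ ≤ 24 * δ := by nlinarith [mul_nonneg hp hR0]
  · have hD' : 2 ≤ ∑ j, (w j : ℝ) := mod_cast hD
    set D := ∑ j, (w j : ℝ)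
    calc (p * s) ^ 2 ≤ (p * D + p * R / 2) ^ 2 := by
          gcongr
          nlinarith
      _ ≤ 2 * ((p * D) ^ 2 + (p * R / 2) ^ 2) := add_sq_le
      _ ≤ 2 * (2 * (p ^ 2 * (D * (D - 1))) + (p * R / 2) ^ 2) := by
          gcongr
          nlinarith [mul_nonneg (sq_nonneg p) (by nlinarith : 0 ≤ D * (D - 2))]
      _ ≤ 24 * δ := by linarith

lemma exists_indicator_approx [DecidableEq V] (hk : 2 ≤ k) (hkn : 2 * k ≤ Fintype.card V)
    (hf : ∀ A ∈ powersetCard k univ, f A = 0 ∨ f A = 1) (hδ : δ ≤ 1) {w : V → ℤ}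
    (h : 𝔼 A ∈ powersetCard k univ, (f A - ∑ j ∈ A, (w j : ℝ)) ^ 2 ≤ δ) :
    ∃ S : Finset V, (#S ≤ 1 ∨ (k / Fintype.card V * #S : ℝ) ^ 2 ≤ 24 * δ) ∧
      𝔼 A ∈ powersetCard k univ, (f A - if ∃ j ∈ S, j ∈ A then 1 else 0) ^ 2 ≤ 5 * δ := by
  have factorial_moment := expect_mul_sub_one_le_of_boolean hf (∑ j ∈ ·, w j)
  push_cast at factorial_moment
  replace factorial_moment := factorial_moment.trans (mul_le_mul_of_nonneg_left h zero_le_two)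
  obtain ⟨hR, hQ⟩ := sum_and_mul_sum_le_of_expect_le hk hkn factorial_moment
  refine ⟨({j | 1 ≤ w j} : Finset V), card_le_one_or_sq_le (by positivity) hδ hR hQ, ?_⟩
  have close := expect_sq_sub_indicator_le (by lia) hf w
  simp only [mem_filter_univ, and_comm (a := 1 ≤ w _)]
  linarith

end Support

section Slice

variable {V : Type*} [Fintype V] [DecidableEq V] {k : ℕ} {f : Finset V → ℝ}

lemma exists_indicator_approx_of_int_approx (hk : 2 ≤ k) (hkn : 2 * k ≤ Fintype.card V)
    (hf : ∀ A ∈ powersetCard k univ, f A = 0 ∨ f A = 1) {δ : ℝ} (hδ : δ ≤ 1 / 20) {m : ℤ}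
    {w : V → ℤ} (h : 𝔼 A ∈ powersetCard k univ, (f A - (m + ∑ j ∈ A, w j : ℤ)) ^ 2 ≤ δ) :
    ∃ S : Finset V, (#S ≤ 1 ∨ (k / Fintype.card V * #S : ℝ) ^ 2 ≤ 24 * δ) ∧
      (𝔼 A ∈ powersetCard k univ, (f A - if ∃ j ∈ S, j ∈ A then 1 else 0) ^ 2 ≤ 5 * δ ∨
        𝔼 A ∈ powersetCard k univ, (1 - f A - if ∃ j ∈ S, j ∈ A then 1 else 0) ^ 2 ≤ 5 * δ) := by
  have : Nonempty V := Fintype.card_pos_iff.1 (by lia)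
  obtain ⟨m', w', hneg, hpos, recentre⟩ := exists_balanced_recentring k m w
  rw [expect_congr rfl fun A hA ↦ by rw [recentre A hA]] at h
  have factorial_moment := expect_mul_sub_one_le_of_boolean hf (m' + ∑ j ∈ ·, w' j)
  push_cast at h factorial_moment
  rcases eq_zero_or_one_of_expect_lt (m := m') (by lia) hkn hneg hpos
    (by linarith) with rfl | rfl
  · rw [Int.cast_zero] at h
    simp only [zero_add] at h
    obtain ⟨S, hS, hfS⟩ := exists_indicator_approx hk hkn hf (by linarith) h
    exact ⟨S, hS, .inl hfS⟩
  · have complement : 𝔼 A ∈ powersetCard k univ,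
        (1 - f A - ∑ j ∈ A, ((-w' j : ℤ) : ℝ)) ^ 2 ≤ δ := by
      refine (expect_congr rfl fun A _ ↦ ?_).trans_le h
      push_cast [sum_neg_distrib]
      ring
    obtain ⟨S, hS, hfS⟩ := exists_indicator_approx hk hkn
      (fun A hA ↦ by rcases hf A hA with h | h <;> simp [h]) (by linarith) complement
    exact ⟨S, hS, .inr hfS⟩

theorem exists_indicator_approx_of_boolean (hk : 2 ≤ k) (hkn : 2 * k ≤ Fintype.card V)
    (hf : ∀ A ∈ powersetCard k univ, f A = 0 ∨ f A = 1) (c : ℝ) (a : V → ℝ) {ε : ℝ}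
    (hε : 𝔼 A ∈ powersetCard k univ, (f A - (c + ∑ j ∈ A, a j)) ^ 2 ≤ ε) :
    ∃ S : Finset V, (#S : ℝ) ≤ max 1 (20000 * √ε * (Fintype.card V / k)) ∧
      (𝔼 A ∈ powersetCard k univ, (f A - if ∃ j ∈ S, j ∈ A then 1 else 0) ^ 2 ≤ 20000 * ε ∨
        𝔼 A ∈ powersetCard k univ,
          (1 - f A - if ∃ j ∈ S, j ∈ A then 1 else 0) ^ 2 ≤ 20000 * ε) := by
  have : Nontrivial V := Fintype.one_lt_card_iff_nontrivial.1 (by lia)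
  have hε0 : 0 ≤ ε := (expect_nonneg fun A _ ↦ sq_nonneg _).trans hε
  rcases le_or_gt (1 / 20000) ε with hε_large | hε_small
  · refine ⟨∅, by simp, .inl ?_⟩
    refine expect_le (powersetCard_nonempty.2 (by rw [card_univ]; lia)) fun A hA ↦ ?_
    rcases hf A hA with h | h <;> simp [h] <;> linarith
  · obtain ⟨m, w, hw⟩ := exists_int_approx (by lia) hkn hf c a
    obtain ⟨S, hS, hfS⟩ := exists_indicator_approx_of_int_approx hk hkn hf
      (δ := 1000 * ε) (by linarith) (by linarith)
    refine ⟨S, ?_, hfS.imp (fun h ↦ by linarith) fun h ↦ by linarith⟩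
    refine le_max_iff.2 (hS.imp (fun h ↦ mod_cast h) fun h ↦ ?_)
    have hk0 : (0 : ℝ) < k := mod_cast (by lia : 0 < k)
    have hn : (0 : ℝ) < Fintype.card V := mod_cast Fintype.card_pos
    have scaled : (k / Fintype.card V * #S : ℝ) ≤ 20000 * √ε := by
      refine (sq_le_sq₀ (by positivity) (by positivity)).1 (h.trans ?_)
      rw [mul_pow, Real.sq_sqrt hε0]
      linarith
    calc (#S : ℝ) = k / Fintype.card V * #S * (Fintype.card V / k) := by field_simp
      _ ≤ 20000 * √ε * (Fintype.card V / k) := by gcongr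

end Slice

section TwoColours

variable {n k : ℕ}

/-- The vector in `[2]^n` whose first colour class, that of the colour `0 : Fin 2`, is `A`. It
identifies the `k`-element subsets of `Fin n` with the slice. -/
def colouring (A : Finset (Fin n)) (j : Fin n) : Fin 2 := if j ∈ A then 0 else 1

lemma colouring_eq_zero {A : Finset (Fin n)} {j : Fin n} : colouring A j = 0 ↔ j ∈ A := by
  simp [colouring]

lemma colouring_filter (u : Fin n → Fin 2) : colouring ({j | u j = 0} : Finset (Fin n)) = u := by
  ext j
  by_cases h : u j = 0
  · simp [colouring, h]
  · simp [colouring, Fin.eq_one_of_ne_zero _ h]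

lemma mem_multislice_two (hk : k ≤ n) {u : Fin n → Fin 2} :
    u ∈ multislice 2 n ![k, n - k] ↔ #{j | u j = 0} = k := by
  have total := card_filter_add_card_filter_not (s := univ) fun j ↦ u j = 0
  have eq_one_iff (i : Fin 2) : i = 1 ↔ ¬ i = 0 := by lia
  rw [card_univ, Fintype.card_fin] at total
  simp only [multislice, mem_filter_univ, Fin.forall_fin_two, Matrix.cons_val_zero,
    Matrix.cons_val_one, eq_one_iff]
  lia

lemma colouring_mem_multislice (hk : k ≤ n) {A : Finset (Fin n)} :
    colouring A ∈ multislice 2 n ![k, n - k] ↔ A ∈ powersetCard k univ := by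
  simp [mem_multislice_two hk, colouring_eq_zero]

lemma msExp_two (hk : k ≤ n) (F : (Fin n → Fin 2) → ℝ) :
    msExp 2 n ![k, n - k] F = 𝔼 A ∈ powersetCard k univ, F (colouring A) := by
  rw [msExp, ← expect_eq_sum_div_card]
  refine expect_nbij' (fun u ↦ ({j | u j = 0} : Finset (Fin n))) colouring (fun u hu ↦ ?_)
    (fun A hA ↦ (colouring_mem_multislice hk).2 hA) (fun u _ ↦ colouring_filter u)
    (fun A _ ↦ by simp [colouring_eq_zero]) fun u _ ↦ by rw [colouring_filter]
  rwa [mem_powersetCard_univ, ← mem_multislice_two hk]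

lemma exists_affine_of_degreeOne (hk : k ≤ n) {p : (Fin n → Fin 2) → ℝ}
    (hp : degreeOne 2 n ![k, n - k] p) :
    ∃ (c : ℝ) (a : Fin n → ℝ), ∀ A ∈ powersetCard k univ, p (colouring A) = c + ∑ j ∈ A, a j := by
  obtain ⟨c, coef, h⟩ := hp
  refine ⟨c + ∑ j, coef j 1, fun j ↦ coef j 0 - coef j 1, fun A hA ↦ ?_⟩
  rw [h _ ((colouring_mem_multislice hk).2 hA), add_assoc, ← filter_univ_mem A, sum_filter,
    ← sum_add_distrib]
  congr! 2 with j
  by_cases hj : j ∈ A <;> simp [xvar, colouring, hj]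

theorem fkn_slice_general (hk : 2 ≤ k) (hkn : 2 * k ≤ n) {f p : (Fin n → Fin 2) → ℝ}
    (hf : booleanOn 2 n ![k, n - k] f) (hp : degreeOne 2 n ![k, n - k] p) {ε : ℝ}
    (hε : msExp 2 n ![k, n - k] (fun u => (f u - p u) ^ 2) ≤ ε) :
    ∃ S : Finset (Fin n), (S.card : ℝ) ≤ max 1 (20000 * Real.sqrt ε * ((n : ℝ) / (k : ℝ))) ∧
      (msExp 2 n ![k, n - k]
          (fun u => (f u - if ∃ j ∈ S, u j = 0 then (1 : ℝ) else 0) ^ 2) ≤ 20000 * ε ∨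
        msExp 2 n ![k, n - k]
          (fun u => ((1 - f u) - if ∃ j ∈ S, u j = 0 then (1 : ℝ) else 0) ^ 2) ≤ 20000 * ε) := by
  have hk' : k ≤ n := by lia
  obtain ⟨c, a, hca⟩ := exists_affine_of_degreeOne hk' hp
  simp only [msExp_two hk', colouring_eq_zero] at hε ⊢
  rw [expect_congr rfl fun A hA ↦ by rw [hca A hA]] at hε
  convert exists_indicator_approx_of_boolean hk (by simpa using hkn)
    (fun A hA ↦ hf _ ((colouring_mem_multislice hk').2 hA)) c a hε
  exact (Fintype.card_fin n).symm

end TwoColours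

/-- **FKN theorem for the slice** (Filmus).  If `f` is Boolean on the slice `M_{(k,n-k)}` with
`2 ≤ k ≤ n/2` and `‖f^{>1}‖² = ε` (expressed via the orthogonal projection `p = f^{≤1}` onto
the degree-one subspace), then `f` or `1 - f` is `Cε`-close to `max_{j ∈ S} x_{j1}` for some
set `S` of at most `max(1, C√ε·(n/k))` coordinates. -/
theorem fkn_slice : ∃ C : ℝ, ∀ n k : ℕ, 2 ≤ k → 2 * k ≤ n →
    ∀ f : (Fin n → Fin 2) → ℝ, booleanOn 2 n ![k, n - k] f →
    ∀ p : (Fin n → Fin 2) → ℝ, degreeOne 2 n ![k, n - k] p →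
    (∀ h : (Fin n → Fin 2) → ℝ, degreeOne 2 n ![k, n - k] h →
      msExp 2 n ![k, n - k] (fun u => (f u - p u) * h u) = 0) →
    ∀ ε : ℝ, msExp 2 n ![k, n - k] (fun u => (f u - p u) ^ 2) = ε →
    ∃ S : Finset (Fin n), (S.card : ℝ) ≤ max 1 (C * Real.sqrt ε * ((n : ℝ) / (k : ℝ))) ∧
      (msExp 2 n ![k, n - k]
          (fun u => (f u - if ∃ j ∈ S, u j = 0 then (1 : ℝ) else 0) ^ 2) ≤ C * ε ∨
        msExp 2 n ![k, n - k]
          (fun u => ((1 - f u) - if ∃ j ∈ S, u j = 0 then (1 : ℝ) else 0) ^ 2) ≤ C * ε) :=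
  ⟨20000, fun _ _ hk hkn _ hf _ hp _ _ hε ↦ fkn_slice_general hk hkn hf hp hε.le⟩
end
end

section
/- Fix an integer ℓ ≥ 2 and a parameter ρ > 0. There exist constants N = N(ℓ,ρ), η = η(ℓ,ρ) > 0 and C = C(ℓ,ρ) such that the following holds for every ρ-balanced multislice M_κ on n ≥ N points and ℓ colours and every ε ≤ η. If f : M_κ → ℝ is a degree-one function which satisfies E[dist(f,{0,1})²] = ε and Inf_{j_1 j_2}[f] ≤ η for all coordinates j_1, j_2 ∈ [n], then there exists a constant c ∈ {0,1} such that E[(f−c)²] ≤ Cε and |E[f] − c| ≤ C√ε. -/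
open Finset

noncomputable section

/-- The influence `Inf_{j₁j₂}[f] = E[(f(u) - f(u^{(j₁ j₂)}))²]`. -/
def influence (ℓ n : ℕ) (κ : Fin ℓ → ℕ) (j₁ j₂ : Fin n) (f : (Fin n → Fin ℓ) → ℝ) : ℝ :=
  msExp ℓ n κ (fun u => (f u - f (u ∘ Equiv.swap j₁ j₂)) ^ 2)

/-!
Round `f` softly: let `g = softRound ∘ f`, where `softRound` is Lipschitz and constant near `0` and
near `1`. On a balanced multislice every pair of distinct colours appears at two given coordinates
with probability at least `ρ²`, so for a degree-one `f` with small influences *all* the differences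
`f u - f (u ∘ swap j k)` are small, not only their mean squares. Hence `g u` and `g (u ∘ swap j k)`
can differ only where `f u` is at distance at least `1/8` from `{0, 1}`, and the influences of `g`
are `O(ε)` times those of `f`. The Poincaré inequality for random transpositions bounds the variance
of `g` by the sum of its influences divided by `n`, while the influences of a degree-one function
add up to exactly `4n` times its variance, which is bounded because `f` is close to Boolean. So `g`
has variance `O(ε)`, which keeps `f` close to a constant, and that constant is close to `{0, 1}`.

The Poincaré inequality is proved by induction on the set `S` of points moved by the permutations
averaged over: conditioning on the position of one point `j ∈ S` costs the energies of the
transpositions of `j` with `S`, and the resulting bounds are averaged over `j`.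
-/

open scoped BigOperators
open Equiv (Perm swap)

theorem sq_expect_le_expect_sq {ι : Type*} (s : Finset ι) (f : ι → ℝ) :
    (𝔼 i ∈ s, f i) ^ 2 ≤ 𝔼 i ∈ s, f i ^ 2 := by
  simpa only [expect_eq_sum_div_card] using sum_div_card_sq_le_sum_sq_div_card

theorem abs_expect_sub_le_sqrt {ι : Type*} {s : Finset ι} (hs : s.Nonempty) (f : ι → ℝ) (c : ℝ) :
    |𝔼 i ∈ s, f i - c| ≤ √(𝔼 i ∈ s, (f i - c) ^ 2) := by
  refine Real.abs_le_sqrt ?_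
  simpa only [expect_sub_distrib, expect_const hs] using sq_expect_le_expect_sq s fun i => f i - c

section CosetAverage

variable {G : Type*} [Group G] (H : Subgroup G) [Fintype H]

/-- The average of `g` over the left coset `x H`. For a uniformly random `x` this is the
conditional expectation of `g x` given `x H`. -/
def cosetAvg (g : G → ℝ) (x : G) : ℝ :=
  𝔼 h : H, g (x * h)

theorem cosetAvg_mul_right (g : G → ℝ) (x : G) {h : G} (hh : h ∈ H) :
    cosetAvg H g (x * h) = cosetAvg H g x :=
  Fintype.expect_equiv (Equiv.mulLeft (⟨h, hh⟩ : H)) _ _ fun k => by simp [mul_assoc]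

theorem cosetAvg_sub (f g : G → ℝ) (x : G) :
    cosetAvg H (fun y => f y - g y) x = cosetAvg H f x - cosetAvg H g x :=
  expect_sub_distrib ..

theorem cosetAvg_eq_self (hH : H = ⊥) (g : G → ℝ) (x : G) : cosetAvg H g x = g x := by
  subst hH
  simp [cosetAvg, Subgroup.mem_bot.1 (Subtype.prop _)]

theorem cosetAvg_eq_expect [Fintype G] (hH : H = ⊤) (g : G → ℝ) (x : G) :
    cosetAvg H g x = 𝔼 y, g y := by
  subst hH
  exact Fintype.expect_equiv (Subgroup.topEquiv.toEquiv.trans (Equiv.mulLeft x)) _ _ fun _ => rfl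

variable [Fintype G]

theorem expect_cosetAvg_mul (g : G → ℝ) {φ : G → ℝ} (hφ : ∀ x, ∀ h ∈ H, φ (x * h) = φ x) :
    𝔼 x, cosetAvg H g x * φ x = 𝔼 x, g x * φ x :=
  calc 𝔼 x, cosetAvg H g x * φ x
    _ = 𝔼 h : H, 𝔼 x, g (x * h) * φ x := by
      simp only [cosetAvg, expect_mul]
      exact expect_comm ..
    _ = 𝔼 _h : H, 𝔼 x, g x * φ x :=
      expect_congr rfl fun h _ =>
        Fintype.expect_equiv (Equiv.mulRight (h : G)) _ _ fun x => by simp [hφ x h h.2]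
    _ = 𝔼 x, g x * φ x := Fintype.expect_const _

theorem expect_sq_sub_eq_expect_sq_sub_cosetAvg_add (g : G → ℝ) {φ : G → ℝ}
    (hφ : ∀ x, ∀ h ∈ H, φ (x * h) = φ x) :
    𝔼 x, (g x - φ x) ^ 2 =
      𝔼 x, (g x - cosetAvg H g x) ^ 2 + 𝔼 x, (cosetAvg H g x - φ x) ^ 2 := by
  have orthogonal : 𝔼 x, cosetAvg H g x * (cosetAvg H g x - φ x) =
      𝔼 x, g x * (cosetAvg H g x - φ x) :=
    expect_cosetAvg_mul H g fun x h hh => by rw [cosetAvg_mul_right H g x hh, hφ x h hh]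
  calc 𝔼 x, (g x - φ x) ^ 2
    _ = 𝔼 x, ((g x - cosetAvg H g x) ^ 2 + (cosetAvg H g x - φ x) ^ 2 +
          2 * (g x * (cosetAvg H g x - φ x) - cosetAvg H g x * (cosetAvg H g x - φ x))) :=
      expect_congr rfl fun x _ => by ring
    _ = 𝔼 x, (g x - cosetAvg H g x) ^ 2 + 𝔼 x, (cosetAvg H g x - φ x) ^ 2 := by
      rw [expect_add_distrib, expect_add_distrib, ← mul_expect, expect_sub_distrib, orthogonal,
        sub_self, mul_zero, add_zero]

theorem expect_sq_cosetAvg_le (g : G → ℝ) : 𝔼 x, cosetAvg H g x ^ 2 ≤ 𝔼 x, g x ^ 2 := by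
  have pythagoras := expect_sq_sub_eq_expect_sq_sub_cosetAvg_add H g (φ := 0) fun _ _ _ => rfl
  simp only [Pi.zero_apply, sub_zero] at pythagoras
  exact pythagoras ▸ le_add_of_nonneg_left (expect_nonneg fun _ _ => sq_nonneg _)

end CosetAverage

section RandomTranspositions

variable {α : Type*}

/-- The permutations fixing every point outside `S`. -/
def permsOn (S : Finset α) : Subgroup (Perm α) :=
  fixingSubgroup (Perm α) (S : Set α)ᶜ

theorem mem_permsOn {S : Finset α} {σ : Perm α} : σ ∈ permsOn S ↔ ∀ x ∉ S, σ x = x := by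
  simp [permsOn, mem_fixingSubgroup_iff]

theorem apply_mem_of_mem_permsOn {S : Finset α} {σ : Perm α} (hσ : σ ∈ permsOn S) {x : α}
    (hx : x ∈ S) : σ x ∈ S := by
  by_contra hσx
  exact hσx (by rwa [σ.injective (mem_permsOn.1 hσ _ hσx)])

theorem permsOn_mono : Monotone (permsOn (α := α)) := fun _ _ hST =>
  fixingSubgroup_antitone _ _ (Set.compl_subset_compl.2 (coe_subset.2 hST))

theorem permsOn_univ [Fintype α] : permsOn (univ : Finset α) = ⊤ :=
  eq_top_iff.2 fun _ _ => mem_permsOn.2 fun x hx => (hx (mem_univ x)).elim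

theorem permsOn_eq_bot {S : Finset α} (hS : #S ≤ 1) : permsOn S = ⊥ := by
  refine (Subgroup.eq_bot_iff_forall _).2 fun σ hσ => Equiv.ext fun x => ?_
  by_cases hx : x ∈ S
  · exact card_le_one.1 hS _ (apply_mem_of_mem_permsOn hσ hx) _ hx
  · exact mem_permsOn.1 hσ x hx

variable [DecidableEq α]

theorem swap_mem_permsOn {S : Finset α} {l j : α} (hl : l ∈ S) (hj : j ∈ S) :
    swap l j ∈ permsOn S :=
  mem_permsOn.2 fun _ hx =>
    Equiv.swap_apply_of_ne_of_ne (ne_of_mem_of_not_mem hl hx).symm (ne_of_mem_of_not_mem hj hx).symm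

/-- Every permutation supported on `S` factors uniquely as a permutation fixing `j` followed on the
right by a transposition `swap l j` with `l ∈ S`, namely `l = τ⁻¹ j`. -/
def permsOnEquivProd {S : Finset α} {j : α} (hj : j ∈ S) :
    permsOn S ≃ permsOn (S.erase j) × S where
  toFun τ :=
    have hl : (τ : Perm α)⁻¹ j ∈ S := apply_mem_of_mem_permsOn (inv_mem τ.2) hj
    (⟨τ * swap ((τ : Perm α)⁻¹ j) j, mem_permsOn.2 fun x hx => by
      by_cases hxj : x = j
      · simp [hxj]
      · exact mem_permsOn.1 (mul_mem τ.2 (swap_mem_permsOn hl hj)) x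
          fun hxS => hx (mem_erase.2 ⟨hxj, hxS⟩)⟩, ⟨_, hl⟩)
  invFun p := ⟨p.1 * swap (p.2 : α) j,
    mul_mem (permsOn_mono (erase_subset j S) p.1.2) (swap_mem_permsOn p.2.2 hj)⟩
  left_inv τ := by simp [mul_assoc]
  right_inv := by
    rintro ⟨⟨σ, hσ⟩, l, hl⟩
    have hσj : σ⁻¹ j = j := mem_permsOn.1 (inv_mem hσ) j (notMem_erase j S)
    have hl' : (σ * swap l j)⁻¹ j = l := by
      rw [mul_inv_rev, Equiv.Perm.mul_apply, hσj, Equiv.swap_inv, Equiv.swap_apply_right]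
    simp only [hl', mul_assoc, Equiv.swap_mul_self, mul_one]

theorem sum_sum_sum_erase (S : Finset α) {w : α → α → ℝ} (hw : ∀ j, w j j = 0) :
    ∑ j ∈ S, ∑ l ∈ S.erase j, ∑ k ∈ S.erase j, w l k = (#S - 2) * ∑ l ∈ S, ∑ k ∈ S, w l k := by
  have erase_sum (j) (hj : j ∈ S) : ∑ l ∈ S.erase j, ∑ k ∈ S.erase j, w l k =
      ∑ l ∈ S, ∑ k ∈ S, w l k - ∑ l ∈ S, w l j - ∑ k ∈ S, w j k := by
    simp only [sum_erase_eq_sub hj, sum_sub_distrib, hw]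
    ring
  rw [sum_congr rfl erase_sum]
  simp only [sum_sub_distrib, sum_const, nsmul_eq_mul]
  rw [sum_comm (s := S) (t := S) (f := fun j l => w l j)]
  ring

variable [Fintype α]

instance (S : Finset α) : Fintype (permsOn S) :=
  Fintype.ofFinite _

theorem cosetAvg_permsOn {S : Finset α} {j : α} (hj : j ∈ S) (g : Perm α → ℝ) (σ : Perm α) :
    cosetAvg (permsOn S) g σ =
      cosetAvg (permsOn (S.erase j)) (fun τ => 𝔼 l ∈ S, g (τ * swap l j)) σ :=
  calc 𝔼 τ : permsOn S, g (σ * τ)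
    _ = 𝔼 p : permsOn (S.erase j) × S, g (σ * p.1 * swap (p.2 : α) j) :=
      Fintype.expect_equiv (permsOnEquivProd hj) _ _ fun τ => by
        simp [permsOnEquivProd, mul_assoc]
    _ = 𝔼 τ : permsOn (S.erase j), 𝔼 l : S, g (σ * τ * swap (l : α) j) := expect_product ..
    _ = 𝔼 τ : permsOn (S.erase j), 𝔼 l ∈ S, g (σ * τ * swap l j) := by
      refine expect_congr rfl fun τ _ => ?_
      rw [expect_eq_sum_div_card, expect_eq_sum_div_card, card_univ, Fintype.card_coe,
        sum_coe_sort S fun l => g (σ * τ * swap l j)]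

/-- The Dirichlet form of `g` along right multiplication by the transposition `swap l j`. -/
def swapEnergy (g : Perm α → ℝ) (l j : α) : ℝ :=
  𝔼 σ, (g σ - g (σ * swap l j)) ^ 2

theorem swapEnergy_nonneg (g : Perm α → ℝ) (l j : α) : 0 ≤ swapEnergy g l j :=
  expect_nonneg fun _ _ => sq_nonneg _

theorem swapEnergy_self (g : Perm α → ℝ) (j : α) : swapEnergy g j j = 0 := by
  simp [swapEnergy, Equiv.swap_self, ← Equiv.Perm.one_def]

theorem expect_sq_cosetAvg_erase_sub_le {S : Finset α} {j : α} (hj : j ∈ S) (g : Perm α → ℝ) :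
    𝔼 σ, (cosetAvg (permsOn (S.erase j)) g σ - cosetAvg (permsOn S) g σ) ^ 2 ≤
      𝔼 l ∈ S, swapEnergy g l j :=
  calc 𝔼 σ, (cosetAvg (permsOn (S.erase j)) g σ - cosetAvg (permsOn S) g σ) ^ 2
    _ = 𝔼 σ, cosetAvg (permsOn (S.erase j)) (fun τ => 𝔼 l ∈ S, (g τ - g (τ * swap l j))) σ ^ 2 := by
      simp only [cosetAvg_permsOn hj, ← cosetAvg_sub, expect_sub_distrib, expect_const ⟨j, hj⟩]
    _ ≤ 𝔼 σ, (𝔼 l ∈ S, (g σ - g (σ * swap l j))) ^ 2 := expect_sq_cosetAvg_le ..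
    _ ≤ 𝔼 σ, 𝔼 l ∈ S, (g σ - g (σ * swap l j)) ^ 2 :=
      expect_le_expect fun σ _ => sq_expect_le_expect_sq ..
    _ = 𝔼 l ∈ S, swapEnergy g l j := expect_comm ..

theorem expect_sq_sub_cosetAvg_le_erase {S : Finset α} {j : α} (hj : j ∈ S) (g : Perm α → ℝ) :
    𝔼 σ, (g σ - cosetAvg (permsOn S) g σ) ^ 2 ≤
      𝔼 σ, (g σ - cosetAvg (permsOn (S.erase j)) g σ) ^ 2 + 𝔼 l ∈ S, swapEnergy g l j := by
  rw [expect_sq_sub_eq_expect_sq_sub_cosetAvg_add (permsOn (S.erase j)) g fun σ τ hτ =>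
    cosetAvg_mul_right (permsOn S) g σ (permsOn_mono (erase_subset j S) hτ)]
  gcongr
  exact expect_sq_cosetAvg_erase_sub_le hj g

theorem expect_sq_sub_cosetAvg_le (g : Perm α → ℝ) (S : Finset α) :
    𝔼 σ, (g σ - cosetAvg (permsOn S) g σ) ^ 2 ≤ (∑ l ∈ S, ∑ j ∈ S, swapEnergy g l j) / #S := by
  induction S using Finset.strongInduction with | H S ih
  set W := ∑ l ∈ S, ∑ j ∈ S, swapEnergy g l j with hW
  have hW0 : 0 ≤ W := sum_nonneg fun l _ => sum_nonneg fun j _ => swapEnergy_nonneg g l j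
  set D := 𝔼 σ, (g σ - cosetAvg (permsOn S) g σ) ^ 2
  rcases le_or_gt #S 1 with hS | hS
  · have cosetAvg_eq := cosetAvg_eq_self _ (permsOn_eq_bot hS) g
    have hD0 : D = 0 := expect_eq_zero fun σ _ => by rw [cosetAvg_eq, sub_self, sq, zero_mul]
    rw [hD0]
    exact div_nonneg hW0 (Nat.cast_nonneg _)
  have hS' : (1 : ℝ) < #S := mod_cast hS
  have peel (j) (hj : j ∈ S) : D ≤
      (∑ l ∈ S.erase j, ∑ k ∈ S.erase j, swapEnergy g l k) / (#S - 1) +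
        (∑ l ∈ S, swapEnergy g l j) / #S := by
    have := ih _ (erase_ssubset hj)
    rw [cast_card_erase_of_mem hj] at this
    rw [← expect_eq_sum_div_card]
    exact (expect_sq_sub_cosetAvg_le_erase hj g).trans (by gcongr)
  have average := sum_le_sum peel
  rw [sum_const, nsmul_eq_mul, sum_add_distrib, ← sum_div, ← sum_div,
    sum_sum_sum_erase S (swapEnergy_self g), sum_comm (f := fun j l => swapEnergy g l j), ← hW]
    at average
  rw [le_div_iff₀' (by linarith)]
  calc #S * D ≤ (#S - 2) * W / (#S - 1) + W / #S := average
    _ ≤ (#S - 2) * W / (#S - 1) + W / (#S - 1) := by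
      gcongr
      exact sub_le_self _ zero_le_one
    _ = W := by
      have : (#S - 1 : ℝ) ≠ 0 := by linarith
      field_simp
      ring

theorem poincare_perm (g : Perm α → ℝ) :
    𝔼 σ, (g σ - 𝔼 τ, g τ) ^ 2 ≤ (∑ l, ∑ j, swapEnergy g l j) / Fintype.card α := by
  simpa only [cosetAvg_eq_expect _ permsOn_univ, card_univ] using expect_sq_sub_cosetAvg_le g univ

end RandomTranspositions

section Rounding

/-- A 2-Lipschitz rounding of the real line to `[0, 1]`, equal to `0` on `(-∞, 1/4]` and to `1` on
`[3/4, ∞)`. -/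
def softRound (t : ℝ) : ℝ := max 0 (min 1 (2 * t - 1 / 2))

theorem dist01_nonneg (t : ℝ) : 0 ≤ dist01 t := le_min (abs_nonneg _) (abs_nonneg _)

theorem exists_abs_sub_eq_dist01 (t : ℝ) : ∃ c : ℝ, (c = 0 ∨ c = 1) ∧ |t - c| = dist01 t := by
  unfold dist01
  rcases min_choice |t| |t - 1| with h | h
  · exact ⟨0, .inl rfl, by rw [h, sub_zero]⟩
  · exact ⟨1, .inr rfl, h.symm⟩

theorem dist01_le_add_abs_sub (s t : ℝ) : dist01 t ≤ dist01 s + |s - t| := by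
  unfold dist01
  grind

theorem sq_le_two_mul_dist01_sq_add (t : ℝ) : t ^ 2 ≤ 2 * dist01 t ^ 2 + 2 := by
  have abs_le_dist01 : |t| ≤ dist01 t + 1 := by
    unfold dist01
    grind
  calc t ^ 2 ≤ (dist01 t + 1) ^ 2 := sq_le_sq' (neg_le_of_abs_le abs_le_dist01)
        (le_of_abs_le abs_le_dist01)
    _ ≤ 2 * (dist01 t ^ 2 + 1 ^ 2) := add_sq_le
    _ = 2 * dist01 t ^ 2 + 2 := by ring

theorem abs_sub_softRound_le (t : ℝ) : |t - softRound t| ≤ dist01 t := by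
  unfold softRound dist01
  rw [abs_le]
  constructor <;> grind

theorem abs_softRound_sub_le (s t : ℝ) : |softRound s - softRound t| ≤ 2 * |s - t| :=
  calc |softRound s - softRound t|
    _ ≤ |min 1 (2 * s - 1 / 2) - min 1 (2 * t - 1 / 2)| := by
      simpa only [softRound, max_comm (0 : ℝ)] using
        abs_max_sub_max_le_abs (min 1 (2 * s - 1 / 2)) (min 1 (2 * t - 1 / 2)) 0
    _ ≤ |(2 * s - 1 / 2) - (2 * t - 1 / 2)| := by
      simpa only [sub_self, abs_zero, abs_nonneg, max_eq_right] using
        abs_min_sub_min_le_max (1 : ℝ) (2 * s - 1 / 2) 1 (2 * t - 1 / 2)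
    _ = 2 * |s - t| := by
      rw [sub_sub_sub_cancel_right, ← mul_sub, abs_mul, abs_two]

theorem softRound_eq_of_dist01_lt {s t : ℝ} (hs : dist01 s < 1 / 8) (hst : |s - t| ≤ 1 / 8) :
    softRound s = softRound t := by
  unfold dist01 at hs
  unfold softRound
  rw [abs_le] at hst
  grind

theorem softRound_sub_sq_le {s t : ℝ} (hst : |s - t| ≤ 1 / 8) :
    (softRound s - softRound t) ^ 2 ≤ 256 * dist01 s ^ 2 * (s - t) ^ 2 := by
  rcases lt_or_ge (dist01 s) (1 / 8) with hs | hs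
  · rw [softRound_eq_of_dist01_lt hs hst, sub_self, zero_pow two_ne_zero]
    positivity
  · have one_le : 1 ≤ 8 * dist01 s := by linarith
    have lipschitz : |softRound s - softRound t| ≤ |8 * dist01 s * (2 * (s - t))| := by
      rw [abs_mul, abs_mul 2, abs_two, abs_of_nonneg (zero_le_one.trans one_le)]
      exact (abs_softRound_sub_le s t).trans (le_mul_of_one_le_left (by positivity) one_le)
    exact (sq_le_sq.2 lipschitz).trans_eq (by ring)

theorem exists_forall_sub_sq_le_softRound (m : ℝ) : ∃ c : ℝ, (c = 0 ∨ c = 1) ∧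
    ∀ t, (t - c) ^ 2 ≤ 18 * dist01 t ^ 2 + 8 * (softRound t - m) ^ 2 := by
  obtain ⟨c, hc, hmc⟩ := exists_abs_sub_eq_dist01 m
  refine ⟨c, hc, fun t => ?_⟩
  have abs_sub_le : |t - c| ≤ 3 * dist01 t + 2 * |softRound t - m| := by
    linarith [abs_sub_le t m c, abs_sub_le t (softRound t) m, abs_sub_softRound_le t,
      dist01_le_add_abs_sub t m]
  calc (t - c) ^ 2 = |t - c| ^ 2 := (sq_abs _).symm
    _ ≤ (3 * dist01 t + 2 * |softRound t - m|) ^ 2 := by gcongr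
    _ ≤ 2 * ((3 * dist01 t) ^ 2 + (2 * |softRound t - m|) ^ 2) := add_sq_le
    _ = 18 * dist01 t ^ 2 + 8 * (softRound t - m) ^ 2 := by
      rw [mul_pow 2, sq_abs]
      ring

theorem expect_sq_le_two_mul_expect_dist01_sq_add {ι : Type*} {s : Finset ι} (hs : s.Nonempty)
    (f : ι → ℝ) : 𝔼 i ∈ s, f i ^ 2 ≤ 2 * (𝔼 i ∈ s, dist01 (f i) ^ 2) + 2 :=
  calc 𝔼 i ∈ s, f i ^ 2
    _ ≤ 𝔼 i ∈ s, (2 * dist01 (f i) ^ 2 + 2) :=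
      expect_le_expect fun i _ => sq_le_two_mul_dist01_sq_add (f i)
    _ = 2 * (𝔼 i ∈ s, dist01 (f i) ^ 2) + 2 := by
      rw [expect_add_distrib, expect_const hs, mul_expect]

end Rounding

section Multislice

variable {ℓ n : ℕ} {κ : Fin ℓ → ℕ} {u v : Fin n → Fin ℓ}

theorem msExp_eq_expect (F : (Fin n → Fin ℓ) → ℝ) :
    msExp ℓ n κ F = 𝔼 u ∈ multislice ℓ n κ, F u :=
  (expect_eq_sum_div_card _ _).symm

theorem influence_eq_expect (j k : Fin n) (F : (Fin n → Fin ℓ) → ℝ) :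
    influence ℓ n κ j k F = 𝔼 u ∈ multislice ℓ n κ, (F u - F (u ∘ swap j k)) ^ 2 :=
  msExp_eq_expect _

theorem influence_nonneg (j k : Fin n) (F : (Fin n → Fin ℓ) → ℝ) : 0 ≤ influence ℓ n κ j k F :=
  influence_eq_expect j k F ▸ expect_nonneg fun _ _ => sq_nonneg _

theorem mem_multislice : u ∈ multislice ℓ n κ ↔ ∀ i, #{j | u j = i} = κ i := by
  simp only [multislice, mem_filter_univ]

theorem multislice_nonempty (hκ : ∑ i, κ i = n) : (multislice ℓ n κ).Nonempty := by
  subst hκ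
  refine ⟨fun j => (finSigmaFinEquiv.symm j).1, mem_multislice.2 fun i => ?_⟩
  rw [← Fintype.card_subtype, ← Fintype.card_fin (κ i)]
  exact Fintype.card_congr
    ((finSigmaFinEquiv.symm.subtypeEquiv fun _ => Iff.rfl).trans (Equiv.sigmaSubtype i))

theorem comp_perm_mem_multislice (hu : u ∈ multislice ℓ n κ) (σ : Perm (Fin n)) :
    u ∘ σ ∈ multislice ℓ n κ :=
  mem_multislice.2 fun i => (card_equiv σ fun j => by simp).trans (mem_multislice.1 hu i)

theorem exists_perm_comp_eq (hu : u ∈ multislice ℓ n κ) (hv : v ∈ multislice ℓ n κ) :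
    ∃ σ : Perm (Fin n), u ∘ σ = v := by
  have fiberEquiv (i) : Nonempty ({j // v j = i} ≃ {j // u j = i}) := by
    rw [← Fintype.card_eq, Fintype.card_subtype, Fintype.card_subtype, mem_multislice.1 hu,
      mem_multislice.1 hv]
  exact ⟨Equiv.ofFiberEquiv fun i => (fiberEquiv i).some,
    funext (Equiv.ofFiberEquiv_map _)⟩

theorem sum_comp_of_mem_multislice (hu : u ∈ multislice ℓ n κ) (b : Fin ℓ → ℝ) :
    ∑ j, b (u j) = ∑ i, κ i * b i := by
  rw [← sum_fiberwise (g := u)]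
  refine sum_congr rfl fun i _ => ?_
  rw [sum_congr rfl fun j hj => by rw [(mem_filter.1 hj).2], sum_const, nsmul_eq_mul,
    mem_multislice.1 hu]

theorem expect_multislice_comp_perm (F : (Fin n → Fin ℓ) → ℝ) (σ : Perm (Fin n)) :
    𝔼 u ∈ multislice ℓ n κ, F (u ∘ σ) = 𝔼 u ∈ multislice ℓ n κ, F u :=
  expect_nbij' (· ∘ σ) (· ∘ ⇑σ⁻¹) (fun _ hu => comp_perm_mem_multislice hu _)
    (fun _ hu => comp_perm_mem_multislice hu _) (fun u _ => by ext; simp) (fun u _ => by ext; simp)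
    fun _ _ => rfl

theorem expect_perm_comp (hu : u ∈ multislice ℓ n κ) (F : (Fin n → Fin ℓ) → ℝ) :
    𝔼 σ : Perm (Fin n), F (u ∘ σ) = 𝔼 v ∈ multislice ℓ n κ, F v := by
  have expect_eq (v) (hv : v ∈ multislice ℓ n κ) :
      𝔼 σ : Perm (Fin n), F (v ∘ σ) = 𝔼 σ : Perm (Fin n), F (u ∘ σ) := by
    obtain ⟨τ, rfl⟩ := exists_perm_comp_eq hu hv
    exact Fintype.expect_equiv (Equiv.mulLeft τ) _ _ fun _ => rfl
  calc 𝔼 σ : Perm (Fin n), F (u ∘ σ)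
    _ = 𝔼 v ∈ multislice ℓ n κ, 𝔼 σ : Perm (Fin n), F (v ∘ σ) := by
      rw [expect_congr rfl expect_eq, expect_const ⟨u, hu⟩]
    _ = 𝔼 _σ : Perm (Fin n), 𝔼 v ∈ multislice ℓ n κ, F v := by
      rw [expect_comm]
      exact expect_congr rfl fun σ _ => expect_multislice_comp_perm F σ
    _ = 𝔼 v ∈ multislice ℓ n κ, F v := Fintype.expect_const _

theorem poincare_multislice (hM : (multislice ℓ n κ).Nonempty) (F : (Fin n → Fin ℓ) → ℝ) :
    𝔼 u ∈ multislice ℓ n κ, (F u - 𝔼 v ∈ multislice ℓ n κ, F v) ^ 2 ≤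
      (∑ j, ∑ k, influence ℓ n κ j k F) / n := by
  obtain ⟨u, hu⟩ := hM
  have swapEnergy_eq (j k) : swapEnergy (fun σ => F (u ∘ σ)) j k = influence ℓ n κ j k F :=
    (expect_perm_comp hu fun v => (F v - F (v ∘ swap j k)) ^ 2).trans
      (influence_eq_expect j k F).symm
  simpa only [swapEnergy_eq, expect_perm_comp hu, Fintype.card_fin,
    expect_perm_comp hu fun v => (F v - 𝔼 w ∈ multislice ℓ n κ, F w) ^ 2]
    using poincare_perm fun σ : Perm (Fin n) => F (u ∘ σ)

theorem card_filter_comp_perm (σ : Perm (Fin n)) (j k : Fin n) (i i' : Fin ℓ) :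
    #{u ∈ multislice ℓ n κ | u (σ j) = i ∧ u (σ k) = i'} =
      #{u ∈ multislice ℓ n κ | u j = i ∧ u k = i'} :=
  card_nbij' (· ∘ σ) (· ∘ ⇑σ⁻¹)
    (fun _ hu => by simp_all [comp_perm_mem_multislice])
    (fun _ hu => by simp_all [comp_perm_mem_multislice])
    (fun u _ => by ext; simp) (fun u _ => by ext; simp)

theorem card_filter_eq_and_eq_mul {j k : Fin n} (hjk : j ≠ k) {i i' : Fin ℓ} (hi : i ≠ i') :
    #{u ∈ multislice ℓ n κ | u j = i ∧ u k = i'} * (n * n - n) =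
      #(multislice ℓ n κ) * (κ i * κ i') := by
  have card_pairs (u) (hu : u ∈ multislice ℓ n κ) :
      #{p ∈ (univ : Finset (Fin n)).offDiag | u p.1 = i ∧ u p.2 = i'} = κ i * κ i' := by
    rw [← mem_multislice.1 hu i, ← mem_multislice.1 hu i', ← card_product]
    congr 1
    ext p
    simp only [mem_filter, mem_offDiag, mem_univ, true_and, mem_product]
    grind
  have card_slices (p : Fin n × Fin n) (hp : p ∈ univ.offDiag) :
      #{u ∈ multislice ℓ n κ | u p.1 = i ∧ u p.2 = i'} =
        #{u ∈ multislice ℓ n κ | u j = i ∧ u k = i'} := by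
    obtain ⟨σ, hσj, hσk⟩ := MulAction.is_two_pretransitive_iff.1
      (Equiv.Perm.isMultiplyPretransitive (Fin n) 2) hjk (mem_offDiag.1 hp).2.2
    rw [← hσj, ← hσk]
    exact card_filter_comp_perm ..
  have double_count := sum_card_bipartiteAbove_eq_sum_card_bipartiteBelow
    (s := multislice ℓ n κ) (t := univ.offDiag) fun u p => u p.1 = i ∧ u p.2 = i'
  simp only [bipartiteAbove, bipartiteBelow] at double_count
  rw [sum_congr rfl card_pairs, sum_congr rfl card_slices, sum_const, sum_const, offDiag_card,
    card_fin, smul_eq_mul, smul_eq_mul] at double_count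
  rw [double_count, mul_comm]

theorem sq_mul_card_multislice_le {ρ : ℝ} (hρ : 0 ≤ ρ) (hκ : ∀ i, ρ * n ≤ κ i) {j k : Fin n}
    (hjk : j ≠ k) {i i' : Fin ℓ} (hi : i ≠ i') :
    ρ ^ 2 * #(multislice ℓ n κ) ≤ #{u ∈ multislice ℓ n κ | u j = i ∧ u k = i'} := by
  have hn : (0 : ℝ) < n * n := by
    have := j.pos
    positivity
  refine le_of_mul_le_mul_right ?_ hn
  calc ρ ^ 2 * #(multislice ℓ n κ) * (n * n)
    _ = #(multislice ℓ n κ) * ((ρ * n) * (ρ * n)) := by ring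
    _ ≤ #(multislice ℓ n κ) * (κ i * κ i') := by
      gcongr
      exacts [hκ i, hκ i']
    _ = #{u ∈ multislice ℓ n κ | u j = i ∧ u k = i'} * (n * n - n : ℕ) :=
      mod_cast (card_filter_eq_and_eq_mul hjk hi).symm
    _ ≤ #{u ∈ multislice ℓ n κ | u j = i ∧ u k = i'} * (n * n) := by
      gcongr
      exact_mod_cast Nat.sub_le ..

end Multislice

section DegreeOne

theorem sum_sub_sum_comp_swap {α β : Type*} [Fintype α] [DecidableEq α] (a : α → β → ℝ)
    (u : α → β) (j k : α) :
    ∑ m, a m (u m) - ∑ m, a m ((u ∘ swap j k) m) =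
      a j (u j) + a k (u k) - a j (u k) - a k (u j) := by
  rcases eq_or_ne j k with rfl | hjk
  · simp
  rw [← sum_sub_distrib, Fintype.sum_eq_add j k hjk fun m hm => by
    simp [Equiv.swap_apply_of_ne_of_ne hm.1 hm.2]]
  simp only [Function.comp_apply, Equiv.swap_apply_left, Equiv.swap_apply_right]
  ring

variable {ℓ n : ℕ} {κ : Fin ℓ → ℕ} {f : (Fin n → Fin ℓ) → ℝ} {u : Fin n → Fin ℓ}

theorem exists_eq_add_sum_of_degreeOne (hf : degreeOne ℓ n κ f) :
    ∃ (c : ℝ) (a : Fin n → Fin ℓ → ℝ), ∀ u ∈ multislice ℓ n κ, f u = c + ∑ j, a j (u j) := by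
  obtain ⟨c, a, hf⟩ := hf
  exact ⟨c, a, fun u hu => by simp only [hf u hu, xvar, mul_ite, mul_one, mul_zero, sum_ite_eq,
    mem_univ, if_true]⟩

theorem sub_comp_swap_of_eq_add_sum {c : ℝ} {a : Fin n → Fin ℓ → ℝ}
    (hf : ∀ u ∈ multislice ℓ n κ, f u = c + ∑ j, a j (u j)) (hu : u ∈ multislice ℓ n κ)
    (j k : Fin n) :
    f u - f (u ∘ swap j k) = a j (u j) + a k (u k) - a j (u k) - a k (u j) := by
  rw [hf u hu, hf _ (comp_perm_mem_multislice hu _), add_sub_add_left_eq_sub,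
    sum_sub_sum_comp_swap]

theorem sq_mul_sub_comp_swap_sq_le_influence {ρ : ℝ} (hρ : 0 ≤ ρ) (hκ : ∀ i, ρ * n ≤ κ i)
    (hf : degreeOne ℓ n κ f) (hu : u ∈ multislice ℓ n κ) (j k : Fin n) :
    ρ ^ 2 * (f u - f (u ∘ swap j k)) ^ 2 ≤ influence ℓ n κ j k f := by
  obtain ⟨c, a, hf⟩ := exists_eq_add_sum_of_degreeOne hf
  set Δ := fun v => f v - f (v ∘ swap j k)
  have Δ_eq (v) (hv : v ∈ multislice ℓ n κ) :
      Δ v = a j (v j) + a k (v k) - a j (v k) - a k (v j) :=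
    sub_comp_swap_of_eq_add_sum hf hv j k
  change ρ ^ 2 * Δ u ^ 2 ≤ _
  by_cases huv : u j = u k
  · have hΔ : Δ u = 0 := by
      rw [Δ_eq u hu, huv]
      ring
    simpa only [hΔ, zero_pow two_ne_zero, mul_zero] using influence_nonneg j k f
  have hM : (0 : ℝ) < #(multislice ℓ n κ) := mod_cast card_pos.2 ⟨u, hu⟩
  rw [influence_eq_expect, expect_eq_sum_div_card, le_div_iff₀ hM]
  calc ρ ^ 2 * Δ u ^ 2 * #(multislice ℓ n κ)
    _ = ρ ^ 2 * #(multislice ℓ n κ) * Δ u ^ 2 := by ring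
    _ ≤ #{v ∈ multislice ℓ n κ | v j = u j ∧ v k = u k} * Δ u ^ 2 := by
      gcongr
      exact sq_mul_card_multislice_le hρ hκ (ne_of_apply_ne u huv) huv
    _ = ∑ v ∈ multislice ℓ n κ with v j = u j ∧ v k = u k, Δ v ^ 2 := by
      rw [← nsmul_eq_mul, ← sum_const]
      refine sum_congr rfl fun v hv => ?_
      obtain ⟨hv, hvj, hvk⟩ := mem_filter.1 hv
      rw [Δ_eq u hu, Δ_eq v hv, hvj, hvk]
    _ ≤ ∑ v ∈ multislice ℓ n κ, Δ v ^ 2 :=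
      sum_le_sum_of_subset_of_nonneg (filter_subset ..) fun _ _ _ => sq_nonneg _

theorem sum_sum_sub_comp_swap (hf : degreeOne ℓ n κ f) (hu : u ∈ multislice ℓ n κ) :
    ∑ j, ∑ k, (f u - f (u ∘ swap j k)) = 2 * n * (f u - 𝔼 v ∈ multislice ℓ n κ, f v) := by
  obtain ⟨c, a, hfa⟩ := exists_eq_add_sum_of_degreeOne hf
  set q := 2 * n * c + 2 * ∑ j, ∑ i, κ i * a j i
  have laplacian_eq (v) (hv : v ∈ multislice ℓ n κ) :
      ∑ j, ∑ k, (f v - f (v ∘ swap j k)) = 2 * n * f v - q := by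
    simp only [sub_comp_swap_of_eq_add_sum hfa hv, sum_sub_distrib, sum_add_distrib, sum_const,
      card_univ, Fintype.card_fin, nsmul_eq_mul, ← mul_sum]
    rw [sum_comm (f := fun j k => a k (v j))]
    simp only [sum_comp_of_mem_multislice hv]
    rw [hfa v hv]
    ring
  have expect_laplacian : 𝔼 v ∈ multislice ℓ n κ, ∑ j, ∑ k, (f v - f (v ∘ swap j k)) = 0 := by
    simp only [expect_sum_comm, expect_sub_distrib, expect_multislice_comp_perm, sub_self,
      sum_const_zero]
  rw [expect_congr rfl laplacian_eq, expect_sub_distrib, ← mul_expect, expect_const ⟨u, hu⟩]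
    at expect_laplacian
  rw [laplacian_eq u hu]
  linarith

theorem influence_eq_two_mul_expect (j k : Fin n) (F : (Fin n → Fin ℓ) → ℝ) :
    influence ℓ n κ j k F = 2 * 𝔼 u ∈ multislice ℓ n κ, F u * (F u - F (u ∘ swap j k)) :=
  calc influence ℓ n κ j k F
    _ = 𝔼 u ∈ multislice ℓ n κ,
          (2 * (F u * (F u - F (u ∘ swap j k))) + (F (u ∘ swap j k) ^ 2 - F u ^ 2)) := by
      rw [influence_eq_expect]
      exact expect_congr rfl fun u _ => by ring
    _ = 2 * 𝔼 u ∈ multislice ℓ n κ, F u * (F u - F (u ∘ swap j k)) := by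
      rw [expect_add_distrib, expect_sub_distrib,
        expect_multislice_comp_perm (fun u => F u ^ 2), sub_self, add_zero, mul_expect]

theorem sum_sum_influence (hf : degreeOne ℓ n κ f) :
    ∑ j, ∑ k, influence ℓ n κ j k f =
      4 * n * (𝔼 u ∈ multislice ℓ n κ, f u ^ 2 - (𝔼 u ∈ multislice ℓ n κ, f u) ^ 2) :=
  calc ∑ j, ∑ k, influence ℓ n κ j k f
    _ = 2 * 𝔼 u ∈ multislice ℓ n κ, f u * ∑ j, ∑ k, (f u - f (u ∘ swap j k)) := by
      simp only [influence_eq_two_mul_expect, mul_sum, expect_sum_comm, mul_expect]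
    _ = 2 * 𝔼 u ∈ multislice ℓ n κ,
          (2 * n) * (f u ^ 2 - f u * 𝔼 v ∈ multislice ℓ n κ, f v) := by
      congr 1
      refine expect_congr rfl fun u hu => ?_
      rw [sum_sum_sub_comp_swap hf hu]
      ring
    _ = 4 * n * (𝔼 u ∈ multislice ℓ n κ, f u ^ 2 - (𝔼 u ∈ multislice ℓ n κ, f u) ^ 2) := by
      rw [← mul_expect, expect_sub_distrib, ← expect_mul]
      ring

theorem sum_sum_influence_le (hf : degreeOne ℓ n κ f) :
    ∑ j, ∑ k, influence ℓ n κ j k f ≤ 4 * n * 𝔼 u ∈ multislice ℓ n κ, f u ^ 2 := by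
  rw [sum_sum_influence hf]
  gcongr
  exact sub_le_self _ (sq_nonneg _)

end DegreeOne

section LowInfluence

variable {ℓ n : ℕ} {κ : Fin ℓ → ℕ} {f : (Fin n → Fin ℓ) → ℝ} {ρ : ℝ}

theorem influence_softRound_le (hρ : 0 < ρ) (hκ : ∀ i, ρ * n ≤ κ i) (hf : degreeOne ℓ n κ f)
    {j k : Fin n} (hinf : influence ℓ n κ j k f ≤ ρ ^ 2 / 64) :
    influence ℓ n κ j k (fun u => softRound (f u)) ≤
      256 / ρ ^ 2 * (𝔼 u ∈ multislice ℓ n κ, dist01 (f u) ^ 2) * influence ℓ n κ j k f := by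
  have sub_sq_le (u) (hu : u ∈ multislice ℓ n κ) :
      (f u - f (u ∘ swap j k)) ^ 2 ≤ influence ℓ n κ j k f / ρ ^ 2 :=
    (le_div_iff₀' (by positivity)).2 (sq_mul_sub_comp_swap_sq_le_influence hρ.le hκ hf hu j k)
  have abs_sub_le (u) (hu : u ∈ multislice ℓ n κ) : |f u - f (u ∘ swap j k)| ≤ 1 / 8 := by
    refine abs_le_of_sq_le_sq ?_ (by norm_num)
    calc (f u - f (u ∘ swap j k)) ^ 2 ≤ influence ℓ n κ j k f / ρ ^ 2 := sub_sq_le u hu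
      _ ≤ ρ ^ 2 / 64 / ρ ^ 2 := by gcongr
      _ = (1 / 8) ^ 2 := by
        field_simp
        norm_num
  rw [influence_eq_expect, mul_expect, expect_mul]
  refine expect_le_expect fun u hu => ?_
  calc (softRound (f u) - softRound (f (u ∘ swap j k))) ^ 2
    _ ≤ 256 * dist01 (f u) ^ 2 * (f u - f (u ∘ swap j k)) ^ 2 :=
      softRound_sub_sq_le (abs_sub_le u hu)
    _ ≤ 256 * dist01 (f u) ^ 2 * (influence ℓ n κ j k f / ρ ^ 2) := by
      gcongr
      exact sub_sq_le u hu
    _ = 256 / ρ ^ 2 * dist01 (f u) ^ 2 * influence ℓ n κ j k f := by ring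

theorem expect_softRound_sub_expect_sq_le (hρ : 0 < ρ) (hκ : ∀ i, ρ * n ≤ κ i)
    (hM : (multislice ℓ n κ).Nonempty) (hf : degreeOne ℓ n κ f)
    (hinf : ∀ j k, influence ℓ n κ j k f ≤ ρ ^ 2 / 64) :
    𝔼 u ∈ multislice ℓ n κ,
        (softRound (f u) - 𝔼 v ∈ multislice ℓ n κ, softRound (f v)) ^ 2 ≤
      1024 / ρ ^ 2 * (𝔼 u ∈ multislice ℓ n κ, dist01 (f u) ^ 2) *
        𝔼 u ∈ multislice ℓ n κ, f u ^ 2 := by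
  set ε := 𝔼 u ∈ multislice ℓ n κ, dist01 (f u) ^ 2
  have : 0 ≤ ε := expect_nonneg fun _ _ => sq_nonneg _
  have : 0 ≤ 𝔼 u ∈ multislice ℓ n κ, f u ^ 2 := expect_nonneg fun _ _ => sq_nonneg _
  refine (poincare_multislice hM _).trans (div_le_of_le_mul₀ n.cast_nonneg (by positivity) ?_)
  calc ∑ j, ∑ k, influence ℓ n κ j k (fun u => softRound (f u))
    _ ≤ ∑ j, ∑ k, 256 / ρ ^ 2 * ε * influence ℓ n κ j k f := by
      gcongr with j _ k _
      exact influence_softRound_le hρ hκ hf (hinf j k)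
    _ = 256 / ρ ^ 2 * ε * ∑ j, ∑ k, influence ℓ n κ j k f := by simp only [mul_sum]
    _ ≤ 256 / ρ ^ 2 * ε * (4 * n * 𝔼 u ∈ multislice ℓ n κ, f u ^ 2) := by
      gcongr
      exact sum_sum_influence_le hf
    _ = 1024 / ρ ^ 2 * ε * (𝔼 u ∈ multislice ℓ n κ, f u ^ 2) * n := by ring

theorem exists_expect_sub_sq_le (hρ : 0 < ρ) (hκ : ∀ i, ρ * n ≤ κ i)
    (hM : (multislice ℓ n κ).Nonempty) (hf : degreeOne ℓ n κ f)
    (hinf : ∀ j k, influence ℓ n κ j k f ≤ ρ ^ 2 / 64) :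
    ∃ c : ℝ, (c = 0 ∨ c = 1) ∧ 𝔼 u ∈ multislice ℓ n κ, (f u - c) ^ 2 ≤
      (18 + 32768 / ρ ^ 2) * 𝔼 u ∈ multislice ℓ n κ, dist01 (f u) ^ 2 := by
  have expect_sq_le := expect_sq_le_two_mul_expect_dist01_sq_add hM f
  have variance_le := expect_softRound_sub_expect_sq_le hρ hκ hM hf hinf
  set ε := 𝔼 u ∈ multislice ℓ n κ, dist01 (f u) ^ 2 with hε
  have : 0 ≤ ε := expect_nonneg fun _ _ => sq_nonneg _
  rcases le_or_gt ε 1 with hε1 | hε1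
  · obtain ⟨c, hc, sub_sq_le⟩ :=
      exists_forall_sub_sq_le_softRound (𝔼 v ∈ multislice ℓ n κ, softRound (f v))
    refine ⟨c, hc, ?_⟩
    calc 𝔼 u ∈ multislice ℓ n κ, (f u - c) ^ 2
      _ ≤ 18 * ε + 8 * 𝔼 u ∈ multislice ℓ n κ,
            (softRound (f u) - 𝔼 v ∈ multislice ℓ n κ, softRound (f v)) ^ 2 := by
        rw [hε, mul_expect, mul_expect, ← expect_add_distrib]
        exact expect_le_expect fun u _ => sub_sq_le (f u)
      _ ≤ 18 * ε + 8 * (1024 / ρ ^ 2 * ε * 4) := by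
        gcongr
        refine variance_le.trans ?_
        gcongr
        linarith
      _ = (18 + 32768 / ρ ^ 2) * ε := by ring
  · refine ⟨0, .inl rfl, ?_⟩
    calc 𝔼 u ∈ multislice ℓ n κ, (f u - 0) ^ 2
      _ ≤ 2 * ε + 2 := by simpa only [sub_zero] using expect_sq_le
      _ ≤ 18 * ε := by linarith
      _ ≤ (18 + 32768 / ρ ^ 2) * ε := by
        gcongr
        exact le_add_of_nonneg_right (by positivity)

theorem fkn_multislice_low_influence_general (hρ : 0 < ρ) (hκ : ∀ i, ρ * n ≤ κ i)
    (hn : ∑ i, κ i = n) (hf : degreeOne ℓ n κ f)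
    (hinf : ∀ j k, influence ℓ n κ j k f ≤ ρ ^ 2 / 64) :
    ∃ c : ℝ, (c = 0 ∨ c = 1) ∧
      msExp ℓ n κ (fun u => (f u - c) ^ 2) ≤
        (18 + 32768 / ρ ^ 2) * msExp ℓ n κ (fun u => dist01 (f u) ^ 2) ∧
      |msExp ℓ n κ f - c| ≤
        (18 + 32768 / ρ ^ 2) * √(msExp ℓ n κ fun u => dist01 (f u) ^ 2) := by
  have hM := multislice_nonempty hn
  have hC : 1 ≤ 18 + 32768 / ρ ^ 2 := le_add_of_le_of_nonneg (by norm_num) (by positivity)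
  obtain ⟨c, hc, expect_le⟩ := exists_expect_sub_sq_le hρ hκ hM hf hinf
  simp only [msExp_eq_expect]
  refine ⟨c, hc, expect_le, ?_⟩
  set ε := 𝔼 u ∈ multislice ℓ n κ, dist01 (f u) ^ 2
  calc |𝔼 u ∈ multislice ℓ n κ, f u - c|
    _ ≤ √(𝔼 u ∈ multislice ℓ n κ, (f u - c) ^ 2) := abs_expect_sub_le_sqrt hM f c
    _ ≤ √((18 + 32768 / ρ ^ 2) * ε) := Real.sqrt_le_sqrt expect_le
    _ = √(18 + 32768 / ρ ^ 2) * √ε := Real.sqrt_mul (by positivity) ε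
    _ ≤ (18 + 32768 / ρ ^ 2) * √ε := by
      gcongr
      exact Real.sqrt_le_self_iff.2 (.inr hC)

end LowInfluence

/-- If a degree-one function on a `ρ`-balanced multislice is `ε`-close to Boolean and all its
pairwise influences are small, then it is close to a constant in `{0,1}`. -/
theorem fkn_multislice_low_influence (ℓ : ℕ) (hℓ : 2 ≤ ℓ) (ρ : ℝ) (hρ : 0 < ρ) :
    ∃ (N : ℕ) (η C : ℝ), 0 < η ∧ ∀ n : ℕ, N ≤ n → ∀ κ : Fin ℓ → ℕ,
      (∀ i, 0 < κ i) → (∀ i, ρ * n ≤ (κ i : ℝ)) → (∑ i, κ i = n) →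
      ∀ ε : ℝ, ε ≤ η →
      ∀ f : (Fin n → Fin ℓ) → ℝ, degreeOne ℓ n κ f →
      msExp ℓ n κ (fun u => dist01 (f u) ^ 2) = ε →
      (∀ j₁ j₂ : Fin n, influence ℓ n κ j₁ j₂ f ≤ η) →
      ∃ c : ℝ, (c = 0 ∨ c = 1) ∧
        msExp ℓ n κ (fun u => (f u - c) ^ 2) ≤ C * ε ∧
        |msExp ℓ n κ f - c| ≤ C * Real.sqrt ε := by
  refine ⟨0, ρ ^ 2 / 64, 18 + 32768 / ρ ^ 2, by positivity, ?_⟩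
  rintro n - κ - hκ hn _ - f hf rfl hinf
  exact fkn_multislice_low_influence_general hρ hκ hn hf hinf
end
end
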